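/- arXiv:1911.07417 — 5 statements merged into one kernel-verified Lean document; each statement's English description precedes it below -/
import Mathlib

section
/- Let n, m, t be positive integers with t ≥ 1, and let S₁, ..., Sₘ be subsets of {1, ..., n} such that every point i ∈ {1, ..., n} belongs to at most t of the sets Sⱼ. Then there exists a coloring χ : {1, ..., n} → {-1, 1} such that for every j ∈ {1, ..., m}, |∑_{i ∈ Sⱼ} χ(i)| ≤ 2t - 1. -/
/-!
The proof rounds a fractional coloring `x : [n] → [-1, 1]`, starting from `x = 0`. A point is
*floating* while `|x i| < 1`. Call a set live if it has more than `t` floating points. Counting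
incidences between floating points and live sets shows that there are fewer live sets than
floating points (`card_live_lt`), so some nonzero direction supported on the floating points
preserves the sum of every live set (`exists_direction`). Moving along it until a coordinate
reaches `±1` (`exists_move`) fixes at least one more point.

Thus every set has sum `0` as long as it is live. When it stops being live it has at most `t`
floating points, each of which can subsequently change by strictly less than `2`, so from then on
its sum stays strictly below `2t` in absolute value (`settled_of_sum_eq_zero`). At the end all
values are `±1`, the sums are integers, and `< 2t` becomes `≤ 2t - 1`.
-/

/-- The points whose color is not yet fixed to `±1` in the fractional coloring `x`. -/
def floating {n : ℕ} (x : Fin n → ℚ) : Finset (Fin n) :=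
  Finset.univ.filter (fun i => |x i| < 1)

lemma mem_floating {n : ℕ} {x : Fin n → ℚ} {i : Fin n} : i ∈ floating x ↔ |x i| < 1 := by
  simp [floating]

/-- The set `A` has sum strictly below `2t` in absolute value however the floating points of `x`
are recolored within `[-1, 1]`. -/
def Settled {n : ℕ} (t : ℕ) (A : Finset (Fin n)) (x : Fin n → ℚ) : Prop :=
  ∀ y : Fin n → ℚ, (∀ i, |y i| ≤ 1) → (∀ i, i ∉ floating x → y i = x i) →
    |∑ i ∈ A, y i| < 2 * (t : ℚ)

lemma settled_of_sum_eq_zero {n t : ℕ} (ht : 1 ≤ t) {A : Finset (Fin n)} {x : Fin n → ℚ}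
    (hsum : ∑ i ∈ A, x i = 0) (hcard : (A ∩ floating x).card ≤ t) : Settled t A x := by
  intro y hy hyx
  have ht' : (1 : ℚ) ≤ t := by exact_mod_cast ht
  have h1 : ∑ i ∈ A, y i = ∑ i ∈ A ∩ floating x, (y i - x i) := by
    have h2 : ∑ i ∈ A ∩ floating x, (y i - x i) = ∑ i ∈ A, (y i - x i) := by
      apply Finset.sum_subset Finset.inter_subset_left
      intro i hi hni
      rw [hyx i (fun h => hni (Finset.mem_inter.2 ⟨hi, h⟩)), sub_self]
    rw [h2, Finset.sum_sub_distrib, hsum, sub_zero]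
  rw [h1]
  rcases (A ∩ floating x).eq_empty_or_nonempty with he | hne
  · rw [he, Finset.sum_empty, abs_zero]
    linarith
  · have hc : ((A ∩ floating x).card : ℚ) ≤ t := by exact_mod_cast hcard
    calc |∑ i ∈ A ∩ floating x, (y i - x i)| ≤ ∑ i ∈ A ∩ floating x, |y i - x i| :=
          Finset.abs_sum_le_sum_abs _ _
      _ < ∑ i ∈ A ∩ floating x, (2 : ℚ) := by
          apply Finset.sum_lt_sum_of_nonempty hne
          intro i hi
          have hx := mem_floating.1 (Finset.mem_inter.1 hi).2
          have := abs_sub (y i) (x i)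
          linarith [hy i]
      _ = (A ∩ floating x).card * 2 := by rw [Finset.sum_const, nsmul_eq_mul]
      _ ≤ 2 * (t : ℚ) := by linarith

/-- Double counting of the incidences between `F` and the sets meeting `F` in more than `t`
points. -/
lemma card_live_lt {n m t : ℕ} (S : Fin m → Finset (Fin n))
    (hdeg : ∀ i : Fin n, (Finset.univ.filter (fun j => i ∈ S j)).card ≤ t)
    (F : Finset (Fin n)) (hF : F.Nonempty) :
    (Finset.univ.filter (fun j => t < (S j ∩ F).card)).card < F.card := by
  set L := Finset.univ.filter (fun j => t < (S j ∩ F).card) with hL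
  have h1 : L.card * (t + 1) ≤ ∑ j ∈ L, (S j ∩ F).card := by
    rw [← smul_eq_mul]
    apply Finset.card_nsmul_le_sum
    intro j hj
    exact (Finset.mem_filter.1 hj).2
  have h2 : ∑ j ∈ L, (S j ∩ F).card ≤ ∑ j, (S j ∩ F).card :=
    Finset.sum_le_sum_of_subset (Finset.subset_univ _)
  have h3 : ∑ j, (S j ∩ F).card = ∑ i ∈ F, (Finset.univ.filter (fun j => i ∈ S j)).card := by
    have := Finset.sum_card_bipartiteAbove_eq_sum_card_bipartiteBelow
      (s := F) (t := (Finset.univ : Finset (Fin m))) (fun i j => i ∈ S j)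
    simp only [Finset.bipartiteAbove, Finset.bipartiteBelow] at this
    rw [this]
    refine Finset.sum_congr rfl fun j _ => ?_
    rw [Finset.filter_mem_eq_inter, Finset.inter_comm]
  have h4 : ∑ i ∈ F, (Finset.univ.filter (fun j => i ∈ S j)).card ≤ F.card * t := by
    rw [← smul_eq_mul]
    exact Finset.sum_le_card_nsmul _ _ _ (fun i _ => hdeg i)
  have h5 := hF.card_pos
  by_contra! h
  nlinarith

/-- Fewer linear constraints than free coordinates leave a nonzero solution supported on `F`. -/
lemma exists_direction {n m : ℕ} (S : Fin m → Finset (Fin n)) (F : Finset (Fin n))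
    (L : Finset (Fin m)) (hLF : L.card < F.card) :
    ∃ v : Fin n → ℚ, (∃ i, v i ≠ 0) ∧ (∀ i, i ∉ F → v i = 0) ∧
      ∀ j ∈ L, ∑ i ∈ S j, v i = 0 := by
  let E : (F → ℚ) →ₗ[ℚ] (Fin n → ℚ) := Function.ExtendByZero.linearMap ℚ (Subtype.val)
  let T : (Fin n → ℚ) →ₗ[ℚ] (L → ℚ) := LinearMap.pi fun j => ∑ i ∈ S j, LinearMap.proj i
  have hk : LinearMap.ker (T ∘ₗ E) ≠ ⊥ := by
    apply LinearMap.ker_ne_bot_of_finrank_lt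
    simpa using hLF
  obtain ⟨w, hw, hw0⟩ := (Submodule.ne_bot_iff _).1 hk
  obtain ⟨i, hi⟩ := Function.ne_iff.1 hw0
  refine ⟨E w, ⟨i, ?_⟩, ?_, ?_⟩
  · have : E w i = w i := Subtype.val_injective.extend_apply w 0 i
    rw [this]
    exact hi
  · intro k hk
    exact Function.extend_apply' w (0 : Fin n → ℚ) k (fun ⟨a, ha⟩ => hk (ha ▸ a.2))
  · intro j hj
    have := congrFun (LinearMap.mem_ker.1 hw) ⟨j, hj⟩
    simpa [T] using this

/-- Moving from `x` in direction `v` until the boundary of the cube `[-1, 1]ⁿ` is first hit by a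
coordinate that moves. -/
lemma exists_move {n : ℕ} (x v : Fin n → ℚ) (hx : ∀ i, |x i| ≤ 1) (hv : ∃ i, v i ≠ 0) :
    ∃ c : ℚ, (∀ i, |x i + c * v i| ≤ 1) ∧ ∃ i, v i ≠ 0 ∧ |x i + c * v i| = 1 := by
  -- the time at which the coordinate `i` reaches `sign (v i)`
  let f : Fin n → ℚ := fun i => if 0 < v i then (1 - x i) / v i else (-1 - x i) / v i
  obtain ⟨i₀, hi₀, hmin⟩ := Finset.exists_min_image (Finset.univ.filter fun i => v i ≠ 0) f
    (by obtain ⟨i, hi⟩ := hv; exact ⟨i, by simpa using hi⟩)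
  have hvi₀ : v i₀ ≠ 0 := (Finset.mem_filter.1 hi₀).2
  have hnn : 0 ≤ f i₀ := by
    have := abs_le.1 (hx i₀)
    simp only [f]
    split_ifs with h
    · exact div_nonneg (by linarith) h.le
    · exact div_nonneg_of_nonpos (by linarith) (not_lt.1 h)
  refine ⟨f i₀, fun i => ?_, i₀, hvi₀, ?_⟩
  · have hxi := abs_le.1 (hx i)
    rcases lt_trichotomy (v i) 0 with h | h | h
    · have h1 := hmin i (by simpa using h.ne)
      have h2 : f i = (-1 - x i) / v i := if_neg h.not_gt
      rw [h2, le_div_iff_of_neg h] at h1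
      have := mul_nonpos_of_nonneg_of_nonpos hnn h.le
      exact abs_le.2 ⟨by linarith, by linarith⟩
    · simpa [h] using hx i
    · have h1 := hmin i (by simpa using h.ne')
      have h2 : f i = (1 - x i) / v i := if_pos h
      rw [h2, le_div_iff₀ h] at h1
      have := mul_nonneg hnn h.le
      exact abs_le.2 ⟨by linarith, by linarith⟩
  · simp only [f]
    split_ifs with h
    · rw [div_mul_cancel₀ _ hvi₀]; simp
    · rw [div_mul_cancel₀ _ hvi₀]; simp

/-- The rounding process, by induction on the number of floating points. The invariant is that
each set either has sum `0` or is settled. -/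
lemma exists_rounding {n m t : ℕ} (ht : 1 ≤ t) (S : Fin m → Finset (Fin n))
    (hdeg : ∀ i : Fin n, (Finset.univ.filter (fun j => i ∈ S j)).card ≤ t) (k : ℕ) :
    ∀ x : Fin n → ℚ, (floating x).card = k → (∀ i, |x i| ≤ 1) →
      (∀ j, ∑ i ∈ S j, x i = 0 ∨ Settled t (S j) x) →
      ∃ y : Fin n → ℚ, (∀ i, |y i| = 1) ∧ ∀ j, |∑ i ∈ S j, y i| < 2 * (t : ℚ) := by
  induction k using Nat.strong_induction_on with
  | _ k ih =>
  intro x hk hx hinv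
  rcases (floating x).eq_empty_or_nonempty with he | hne
  · refine ⟨x, fun i => le_antisymm (hx i) (not_lt.1 fun h => ?_), fun j => ?_⟩
    · have := mem_floating.2 h
      simp [he] at this
    · rcases hinv j with h | h
      · rw [h, abs_zero]
        have : (1 : ℚ) ≤ t := by exact_mod_cast ht
        linarith
      · exact h x hx fun _ _ => rfl
  · obtain ⟨v, hv0, hvF, hvS⟩ := exists_direction S (floating x) _
      (card_live_lt S hdeg (floating x) hne)
    obtain ⟨c, hc, i₀, hi₀, hci₀⟩ := exists_move x v hx hv0
    have hoff : ∀ i, i ∉ floating x → x i + c * v i = x i := fun i hi => by simp [hvF i hi]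
    have hsub : floating (fun i => x i + c * v i) ⊆ floating x := by
      intro i hi
      by_contra h
      rw [mem_floating, hoff i h] at hi
      exact h (mem_floating.2 hi)
    have hss : floating (fun i => x i + c * v i) ⊂ floating x := by
      refine (Finset.ssubset_iff_of_subset hsub).2 ⟨i₀, ?_, ?_⟩
      · by_contra h
        exact hi₀ (hvF i₀ h)
      · rw [mem_floating, hci₀]
        exact lt_irrefl 1
    refine ih _ (hk ▸ Finset.card_lt_card hss) _ rfl hc fun j => ?_
    have hkeep : Settled t (S j) x → Settled t (S j) (fun i => x i + c * v i) :=
      fun h y hy hyx => h y hy fun i hi => by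
        rw [hyx i (fun h' => hi (hsub h'))]
        exact hoff i hi
    rcases hinv j with h | h
    · by_cases hj : t < (S j ∩ floating x).card
      · left
        rw [Finset.sum_add_distrib, ← Finset.mul_sum, h, hvS j (by simpa using hj)]
        simp
      · exact Or.inr (hkeep (settled_of_sum_eq_zero ht h (not_lt.1 hj)))
    · exact Or.inr (hkeep h)

/-- **Beck–Fiala theorem**: if every point of the universe `{1,...,n}` belongs to at most `t`
of the sets `S₁, ..., Sₘ`, then there is a coloring `χ : [n] → {-1,1}` such that every set has
discrepancy at most `2t - 1`. -/
theorem beck_fiala (n m t : ℕ) (hn : 0 < n) (hm : 0 < m) (ht : 1 ≤ t)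
    (S : Fin m → Finset (Fin n))
    (hdeg : ∀ i : Fin n, (Finset.univ.filter (fun j => i ∈ S j)).card ≤ t) :
    ∃ χ : Fin n → ℤ, (∀ i, χ i = 1 ∨ χ i = -1) ∧
      ∀ j : Fin m, |∑ i ∈ S j, χ i| ≤ 2 * (t : ℤ) - 1 := by
  obtain ⟨y, hy, hyS⟩ := exists_rounding ht S hdeg _ (fun _ => 0) rfl (by simp) (by simp)
  have hχ : ∀ i, ∃ z : ℤ, (z = 1 ∨ z = -1) ∧ (z : ℚ) = y i := by
    intro i
    rcases eq_or_eq_neg_of_abs_eq (hy i) with h | h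
    · exact ⟨1, Or.inl rfl, by simp [h]⟩
    · exact ⟨-1, Or.inr rfl, by simp [h]⟩
  choose χ h1 h2 using hχ
  refine ⟨χ, h1, fun j => ?_⟩
  have h3 := hyS j
  simp only [← h2] at h3
  have h4 : |∑ i ∈ S j, χ i| < 2 * (t : ℤ) := by exact_mod_cast h3
  omega
end

section
/- Let n be a positive integer and let S₁, ..., Sₙ be subsets of {1, ..., n} (a system of n sets on a universe of n points). Then there exists a coloring χ : {1, ..., n} → {-1, 1} such that for every j ∈ {1, ..., n}, |∑_{i ∈ Sⱼ} χ(i)| ≤ 6√n. -/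
/-!
The theorem is proved by minimizing a barrier potential over the cube `[-1, 1]^n`, in place of a
random or step-by-step partial colouring.

Each set `S j` is bounded on both sides: for a fractional colouring `x` the slacks are
`h(x) ∓ ∑_{i ∈ S j} x i`, where the common bound `h(x)` (`height`) depends only on `‖x‖²`, starts at
`3 √n` for `x = 0` and increases to `(3 + 8/3) √n` when `‖x‖² = n`. The potential is the sum of
the inverse fourth powers of all `2n` slacks; at `x = 0` it equals `2 / (81 n)`. Let `x` minimize it
over the points of the cube whose slacks are at least `1`. The minimum value is below `1`, so all
slacks at `x` are in fact larger than `1`, and `x` may be perturbed freely in its fractional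
coordinates, those with `|x i| < 1`.

Suppose that `x` has `k ≥ 3` fractional coordinates, and let `r = ⌊k / 3⌋`. Fewer than `r` sets have
a potential above the share `2 / (81 n r)` (`card_exceptional_lt`). In the space of vectors supported
on the fractional coordinates and orthogonal to `x` and to these sets, which has dimension at least
`k - r`, averaging over an orthonormal basis gives a unit vector `δ` along which the quadratic
second-order term of the remaining sets is at most `k / (k - r)` times the sum of its coefficients
(`exists_unit_orthogonal_small`). Moving by `±ε δ` raises `‖x‖²` by `ε²` and hence raises `h`. The
derivative of `h` with respect to `‖x‖²` is chosen proportional to `(n - ‖x‖²)^(-1/4)`, which, as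
`n - ‖x‖² ≤ k`, is enough for this rise to outweigh the quadratic term (`drift_dominates`). So the
average of the potentials at `x ± ε δ` is smaller than the potential at `x`
(`eventually_symmetrized_lt`), against minimality.

So the minimizer has at most two fractional coordinates. Rounding them changes each sum by at most
`2`, and `(17/3) √n + 2 ≤ 6 √n` once `n ≥ 36`; for `n ≤ 36` every colouring works, as `n ≤ 6 √n`.
-/

open Filter Topology

/-! ### An averaging argument and a second-order expansion -/

/-- Averaging over an orthonormal basis of the orthogonal complement of `T`, whose dimension is at
least `d`: by Bessel's inequality the basis vectors give `∑ p, c p * ⟪b p, ·⟫²` a total of at most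
`K * ∑ p, c p`, so one of them gives at most the fraction `1 / d` of it. -/
theorem exists_unit_orthogonal_small {E ι : Type*} [NormedAddCommGroup E] [InnerProductSpace ℝ E]
    [FiniteDimensional ℝ E] [Fintype ι] [DecidableEq E] (T : Finset E) (d : ℕ) (hd : 0 < d)
    (hT : T.card + d ≤ Module.finrank ℝ E) (c : ι → ℝ) (hc : ∀ p, 0 ≤ c p)
    (b : ι → E) (K : ℝ) (hb : ∀ p, ‖b p‖ ^ 2 ≤ K) :
    ∃ δ : E, ‖δ‖ = 1 ∧ (∀ v ∈ T, inner ℝ v δ = 0) ∧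
      d * ∑ p, c p * (inner ℝ (b p) δ) ^ 2 ≤ K * ∑ p, c p := by
  set W : Submodule ℝ E := (Submodule.span ℝ (T : Set E))ᗮ with hW
  have hdim : d ≤ Module.finrank ℝ W := by
    have h1 := Submodule.finrank_add_finrank_orthogonal (Submodule.span ℝ (T : Set E))
    have h2 := finrank_span_finset_le_card (R := ℝ) T
    rw [← hW] at h1
    simp only [Set.finrank] at h2
    omega
  set e := stdOrthonormalBasis ℝ W with he
  have hon : Orthonormal ℝ (fun l => (e l : E)) :=
    e.orthonormal.comp_linearIsometry W.subtypeₗᵢ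
  have htot : ∑ l, ∑ p, c p * (inner ℝ (b p) (e l : E)) ^ 2 ≤ K * ∑ p, c p := by
    rw [Finset.sum_comm, Finset.mul_sum]
    refine Finset.sum_le_sum fun p _ => ?_
    rw [← Finset.mul_sum, mul_comm K]
    refine mul_le_mul_of_nonneg_left (le_trans ?_ (hb p)) (hc p)
    have := hon.sum_inner_products_le (b p) (s := Finset.univ)
    simpa [real_inner_comm] using this
  have hne : (Finset.univ : Finset (Fin (Module.finrank ℝ W))).Nonempty :=
    ⟨⟨0, by omega⟩, Finset.mem_univ _⟩
  obtain ⟨l, -, hl⟩ := Finset.exists_min_image Finset.univ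
    (fun l => ∑ p, c p * (inner ℝ (b p) (e l : E)) ^ 2) hne
  refine ⟨e l, hon.1 l, fun v hv => ?_, le_trans ?_ htot⟩
  · exact (Submodule.mem_orthogonal _ _).1 (e l).2 v (Submodule.subset_span hv)
  · have h1 := Finset.card_nsmul_le_sum Finset.univ
      (fun l => ∑ p, c p * (inner ℝ (b p) (e l : E)) ^ 2) _ (fun l' h => hl l' h)
    rw [Finset.card_univ, Fintype.card_fin, nsmul_eq_mul] at h1
    refine le_trans (mul_le_mul_of_nonneg_right (by exact_mod_cast hdim) ?_) h1
    exact Finset.sum_nonneg fun p _ => mul_nonneg (hc p) (sq_nonneg _)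

/-- If slacks `s p` change by `g ε² ∓ ε a p`, the average over the two signs of the sum of inverse
fourth powers changes by `ε² ∑ p, (10 (a p)² / (s p)⁶ - 4 g / (s p)⁵) + O(ε⁴)`. So it decreases for
small `ε > 0` as soon as that coefficient is negative. -/
theorem eventually_symmetrized_lt {ι : Type*} [Fintype ι] (s a : ι → ℝ) (g : ℝ)
    (hs : ∀ p, 0 < s p)
    (hneg : ∑ p, (10 * a p ^ 2 / s p ^ 6 - 4 * g / s p ^ 5) < 0) :
    ∀ᶠ ε in 𝓝[>] (0 : ℝ),
      ∑ p, (((s p + g * ε ^ 2 - ε * a p) ^ 4)⁻¹ + ((s p + g * ε ^ 2 + ε * a p) ^ 4)⁻¹)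
        < ∑ p, 2 * ((s p) ^ 4)⁻¹ := by
  -- The symmetrized summand is a rational function `G p` of `e = ε ^ 2`, so that only its first
  -- derivative at `e = 0` is needed.
  set G : ι → ℝ → ℝ := fun p e =>
    2 * ((s p + g * e) ^ 4 + 6 * (s p + g * e) ^ 2 * (e * a p ^ 2) + (e * a p ^ 2) ^ 2) /
      ((s p + g * e) ^ 2 - e * a p ^ 2) ^ 4 with hG
  have hder : ∀ p, HasDerivAt (G p) (2 * (10 * a p ^ 2 / s p ^ 6 - 4 * g / s p ^ 5)) 0 := by
    intro p
    have hs0 := (hs p).ne'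
    have hu : HasDerivAt (fun e : ℝ => s p + g * e) g 0 := by
      simpa using ((hasDerivAt_id (0 : ℝ)).const_mul g).const_add (s p)
    have hv : HasDerivAt (fun e : ℝ => e * a p ^ 2) (a p ^ 2) 0 := by
      simpa using (hasDerivAt_id (0 : ℝ)).mul_const (a p ^ 2)
    have h := HasDerivAt.div
      ((((hu.fun_pow 4).fun_add (((hu.fun_pow 2).const_mul 6).fun_mul hv)).fun_add
        (hv.fun_pow 2)).const_mul 2)
      (((hu.fun_pow 2).fun_sub hv).fun_pow 4) (by simpa using hs0)
    refine HasDerivAt.congr_deriv h ?_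
    simp
    field_simp
    ring
  have hsum : HasDerivAt (fun e => ∑ p, G p e)
      (∑ p, 2 * (10 * a p ^ 2 / s p ^ 6 - 4 * g / s p ^ 5)) 0 :=
    HasDerivAt.fun_sum fun p _ => hder p
  rw [← Finset.mul_sum] at hsum
  have hlt : ∀ᶠ e in 𝓝[>] (0 : ℝ), ∑ p, G p e < ∑ p, G p 0 := by
    have h1 := (hasDerivAt_iff_tendsto_slope.1 hsum).eventually_lt_const
      (by linarith : 2 * (∑ p, (10 * a p ^ 2 / s p ^ 6 - 4 * g / s p ^ 5)) < 0)
    have h2 : 𝓝[>] (0 : ℝ) ≤ 𝓝[≠] 0 := nhdsWithin_mono _ fun y hy => ne_of_gt hy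
    filter_upwards [h2 h1, self_mem_nhdsWithin] with e he hpos
    rw [slope_def_field, sub_zero, div_neg_iff] at he
    have : (0 : ℝ) < e := hpos
    rcases he with ⟨_, h⟩ | ⟨h, _⟩ <;> linarith
  have hsq : Tendsto (fun ε : ℝ => ε ^ 2) (𝓝[>] 0) (𝓝[>] 0) := by
    refine tendsto_nhdsWithin_iff.2 ⟨?_, ?_⟩
    · have : Tendsto (fun ε : ℝ => ε ^ 2) (𝓝 0) (𝓝 (0 ^ 2)) := (continuous_pow 2).tendsto 0
      simpa using this.mono_left nhdsWithin_le_nhds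
    · filter_upwards [self_mem_nhdsWithin] with ε hε
      exact pow_pos (show (0 : ℝ) < ε from hε) 2
  have hpos : ∀ p, ∀ᶠ ε in 𝓝[>] (0 : ℝ),
      0 < s p + g * ε ^ 2 - ε * a p ∧ 0 < s p + g * ε ^ 2 + ε * a p := by
    intro p
    refine nhdsWithin_le_nhds (Filter.Eventually.and ?_ ?_)
    · have : ContinuousAt (fun ε : ℝ => s p + g * ε ^ 2 - ε * a p) 0 := by fun_prop
      exact this.eventually (lt_mem_nhds (by simpa using hs p))
    · have : ContinuousAt (fun ε : ℝ => s p + g * ε ^ 2 + ε * a p) 0 := by fun_prop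
      exact this.eventually (lt_mem_nhds (by simpa using hs p))
  filter_upwards [hsq.eventually hlt, eventually_all.2 hpos] with ε h1 h2
  have h3 : ∀ p, ((s p + g * ε ^ 2 - ε * a p) ^ 4)⁻¹ + ((s p + g * ε ^ 2 + ε * a p) ^ 4)⁻¹
      = G p (ε ^ 2) := by
    intro p
    have ha := (h2 p).1.ne'
    have hb := (h2 p).2.ne'
    have hc : (s p + g * ε ^ 2) ^ 2 - ε ^ 2 * a p ^ 2
        = (s p + g * ε ^ 2 - ε * a p) * (s p + g * ε ^ 2 + ε * a p) := by ring
    simp only [hG]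
    rw [hc, mul_pow]
    field_simp
    ring
  have h4 : ∀ p, G p 0 = 2 * ((s p) ^ 4)⁻¹ := by
    intro p
    have := (hs p).ne'
    simp only [hG]
    field_simp
    ring
  simpa only [h3, h4] using h1

/-! ### The potential -/

/-- The fourth root of a nonnegative real; it is `0` at negative arguments. -/
noncomputable def fourthRoot (y : ℝ) : ℝ := √(√y)

theorem fourthRoot_pow {y : ℝ} (hy : 0 ≤ y) : fourthRoot y ^ 4 = y := by
  rw [fourthRoot, show 4 = 2 * 2 from rfl, pow_mul, Real.sq_sqrt (Real.sqrt_nonneg _),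
    Real.sq_sqrt hy]

theorem fourthRoot_nonneg (y : ℝ) : 0 ≤ fourthRoot y := Real.sqrt_nonneg _

theorem fourthRoot_pos {y : ℝ} (hy : 0 < y) : 0 < fourthRoot y :=
  Real.sqrt_pos.2 (Real.sqrt_pos.2 hy)

@[fun_prop]
theorem continuous_fourthRoot : Continuous fourthRoot :=
  Real.continuous_sqrt.comp Real.continuous_sqrt

/-- The signed indicator vector of a set: `row S (j, true)` is the indicator of `S j`, and
`row S (j, false)` is its negative. The two signs encode the upper and the lower bound on the
discrepancy of `S j`. -/
noncomputable def row {n : ℕ} (S : Fin n → Finset (Fin n)) (p : Fin n × Bool) :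
    EuclideanSpace ℝ (Fin n) :=
  WithLp.toLp 2 fun i => if i ∈ S p.1 then (if p.2 then 1 else -1) else 0

/-- The bound on the discrepancy allowed at the fractional colouring `x`. It is
`3 √n + (8 / (3 n^(1/4))) (n^(3/4) - (n - ‖x‖²)^(3/4))`, so its derivative with respect to `‖x‖²` is
`2 / (n^(1/4) (n - ‖x‖²)^(1/4))`. -/
noncomputable def height {n : ℕ} (x : EuclideanSpace ℝ (Fin n)) : ℝ :=
  3 * fourthRoot n ^ 2 +
    8 / (3 * fourthRoot n) * (fourthRoot n ^ 3 - fourthRoot (n - ‖x‖ ^ 2) ^ 3)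

/-- The distance of the signed discrepancy `⟪row S p, x⟫` from the bound `height x`. -/
noncomputable def slack {n : ℕ} (S : Fin n → Finset (Fin n)) (x : EuclideanSpace ℝ (Fin n))
    (p : Fin n × Bool) : ℝ :=
  height x - inner ℝ (row S p) x

/-- The barrier potential: the sum of the inverse fourth powers of all `2n` slacks. It acts as a
barrier only where all slacks are positive. -/
noncomputable def potential {n : ℕ} (S : Fin n → Finset (Fin n))
    (x : EuclideanSpace ℝ (Fin n)) : ℝ :=
  ∑ p, ((slack S x p) ^ 4)⁻¹

@[fun_prop]
theorem continuous_height {n : ℕ} : Continuous (height (n := n)) := by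
  unfold height; fun_prop

@[fun_prop]
theorem continuous_slack {n : ℕ} (S : Fin n → Finset (Fin n)) (p : Fin n × Bool) :
    Continuous fun x => slack S x p := by
  unfold slack; fun_prop

/-- A unit step direction orthogonal to `x` raises `‖x‖²` by `ε²`, and `height` is convex as a
function of `‖x‖²`, so it lies above its tangent there. -/
theorem height_add_le {n : ℕ} (hn : 0 < n) (x δ : EuclideanSpace ℝ (Fin n)) (hδ : ‖δ‖ = 1)
    (hxδ : inner ℝ x δ = 0) (hx : ‖x‖ ^ 2 < n) (ε : ℝ) (hε : ‖x + ε • δ‖ ^ 2 ≤ n) :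
    height x + 2 / (fourthRoot n * fourthRoot (n - ‖x‖ ^ 2)) * ε ^ 2 ≤ height (x + ε • δ) := by
  have hnorm : ‖x + ε • δ‖ ^ 2 = ‖x‖ ^ 2 + ε ^ 2 := by
    rw [norm_add_sq_real, inner_smul_right, hxδ, norm_smul, hδ]
    simp
  rw [hnorm] at hε
  unfold height
  rw [hnorm]
  have hQ : 0 < fourthRoot n := fourthRoot_pos (by exact_mod_cast hn)
  have hq : 0 < fourthRoot (n - ‖x‖ ^ 2) := fourthRoot_pos (by linarith)
  have hq4 := fourthRoot_pow (y := n - ‖x‖ ^ 2) (by linarith)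
  have hr4 := fourthRoot_pow (y := n - (‖x‖ ^ 2 + ε ^ 2)) (by linarith)
  have hr := fourthRoot_nonneg (n - (‖x‖ ^ 2 + ε ^ 2))
  set Q := fourthRoot n
  set q := fourthRoot (n - ‖x‖ ^ 2)
  set r := fourthRoot (n - (‖x‖ ^ 2 + ε ^ 2))
  have he : ε ^ 2 = q ^ 4 - r ^ 4 := by linarith
  -- The tangent inequality for `y ↦ y^(3/4)`, i.e. `4 q r³ ≤ q⁴ + 3 r⁴`.
  have key : 3 * (q ^ 4 - r ^ 4) / (4 * q) ≤ q ^ 3 - r ^ 3 := by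
    rw [div_le_iff₀ (by positivity)]
    nlinarith [mul_nonneg (sq_nonneg (q - r)) (sq_nonneg (q + r)),
      mul_nonneg (sq_nonneg (q - r)) (sq_nonneg r), mul_nonneg (sq_nonneg (q - r)) (sq_nonneg q),
      mul_nonneg (sq_nonneg (q - r)) (mul_nonneg hq.le hr)]
  have h2 := mul_le_mul_of_nonneg_left key (by positivity : 0 ≤ 8 / (3 * Q))
  have h3 : 2 / (Q * q) * ε ^ 2 = 8 / (3 * Q) * (3 * (q ^ 4 - r ^ 4) / (4 * q)) := by
    rw [he]; field_simp; ring
  rw [h3]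
  linarith

/-- For a slack `s` that is not exceptional, the gain from the rise of `height` exceeds the quadratic
second-order term. In terms of `β = r / k` this amounts to `5⁴ < 16 * 648 * β * (1 - β)⁴`, which
holds on the whole range `1/5 ≤ β ≤ 1/3`. -/
theorem drift_dominates {n k r : ℕ} (hn : 0 < n) (h3 : 3 * r ≤ k) (h5 : k ≤ 5 * r) (hk : 0 < k)
    {y s : ℝ} (hy : 0 < y) (hyk : y ≤ k) (hs : 0 < s)
    (hrs : r * (s ^ 4)⁻¹ ≤ 2 / (81 * n)) :
    10 * (k / (k - r)) / s ^ 6 < 4 * (2 / (fourthRoot n * fourthRoot y)) / s ^ 5 := by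
  have hn' : (0 : ℝ) < n := by exact_mod_cast hn
  have hk' : (0 : ℝ) < k := by exact_mod_cast hk
  have h3' : 3 * (r : ℝ) ≤ k := by exact_mod_cast h3
  have h5' : (k : ℝ) ≤ 5 * r := by exact_mod_cast h5
  have hr' : (0 : ℝ) < r := by linarith
  have hQ := fourthRoot_pos hn'
  have hq := fourthRoot_pos hy
  have hQ4 := fourthRoot_pow hn'.le
  have hq4 := fourthRoot_pow hy.le
  set Q := fourthRoot n
  set q := fourthRoot y
  have hd : (0 : ℝ) < k - r := by linarith
  have hs4 : 81 * n * r ≤ 2 * s ^ 4 := by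
    rw [← div_eq_mul_inv, div_le_div_iff₀ (by positivity) (by positivity)] at hrs
    linarith
  have hpoly : 5 ^ 4 * (k : ℝ) ^ 5 < 16 * 648 * r * (k - r) ^ 4 := by
    obtain ⟨w, hw⟩ : ∃ w : ℝ, w = r / k := ⟨_, rfl⟩
    have hrw : (r : ℝ) = w * k := by rw [hw]; field_simp
    have hw1 : 1 / 5 ≤ w := by rw [hw, div_le_div_iff₀ (by norm_num) hk']; linarith
    have hw2 : w ≤ 1 / 3 := by rw [hw, div_le_div_iff₀ hk' (by norm_num)]; linarith
    have : 5 ^ 4 < 16 * 648 * w * (1 - w) ^ 4 := by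
      have h1 : (2 / 3 : ℝ) ≤ 1 - w := by linarith
      nlinarith [mul_nonneg (sub_nonneg.2 hw1) (sub_nonneg.2 hw2),
        mul_nonneg (mul_nonneg (sub_nonneg.2 hw1) (sub_nonneg.2 hw2)) (sq_nonneg (1 - w)),
        mul_nonneg (mul_nonneg (sub_nonneg.2 hw1) (sub_nonneg.2 hw2)) (sq_nonneg (w)),
        mul_nonneg (mul_nonneg (sub_nonneg.2 hw1) (sub_nonneg.2 hw2)) (sub_nonneg.2 hw2),
        mul_nonneg (mul_nonneg (sub_nonneg.2 hw1) (sub_nonneg.2 hw2))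
          (mul_nonneg (sq_nonneg (1 - w)) (sub_nonneg.2 h1))]
    have h2 := mul_lt_mul_of_pos_right this (pow_pos hk' 5)
    rw [hrw]
    calc 5 ^ 4 * (k : ℝ) ^ 5 < _ := h2
      _ = _ := by ring
  have hmain : 5 * k * (Q * q) < 4 * s * (k - r) := by
    refine lt_of_pow_lt_pow_left₀ 4 (by positivity) ?_
    calc (5 * k * (Q * q)) ^ 4 = 5 ^ 4 * (k : ℝ) ^ 4 * (n * y) := by rw [← hQ4, ← hq4]; ring
      _ ≤ 5 ^ 4 * (k : ℝ) ^ 4 * (n * k) := by gcongr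
      _ = 5 ^ 4 * (k : ℝ) ^ 5 * n := by ring
      _ < 16 * 648 * r * ((k : ℝ) - r) ^ 4 * n := by gcongr
      _ = 128 * ((k : ℝ) - r) ^ 4 * (81 * n * r) := by ring
      _ ≤ 128 * ((k : ℝ) - r) ^ 4 * (2 * s ^ 4) := by gcongr
      _ = (4 * s * (k - r)) ^ 4 := by ring
  rw [div_lt_div_iff₀ (by positivity) (by positivity), ← mul_div_assoc, ← mul_div_assoc,
    div_mul_eq_mul_div, div_mul_eq_mul_div, div_lt_div_iff₀ hd (by positivity)]
  have := mul_lt_mul_of_pos_right hmain (by positivity : 0 < 2 * s ^ 5)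
  nlinarith

/-! ### A point with three fractional coordinates is not a minimizer -/

theorem norm_sq_le_of_mem_cube {n : ℕ} (z : EuclideanSpace ℝ (Fin n)) (hz : ∀ i, |z i| ≤ 1) :
    ‖z‖ ^ 2 ≤ n := by
  rw [EuclideanSpace.real_norm_sq_eq]
  calc ∑ i, z i ^ 2 ≤ ∑ i : Fin n, (1 : ℝ) :=
        Finset.sum_le_sum fun i _ => (sq_le_one_iff_abs_le_one _).2 (hz i)
    _ = n := by simp

/-- Only the fractional coordinates contribute to `n - ‖x‖² = ∑ i, (1 - (x i)²)`. -/
theorem sub_norm_sq_le_card {n : ℕ} (x : EuclideanSpace ℝ (Fin n)) (hx : ∀ i, |x i| ≤ 1) :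
    n - ‖x‖ ^ 2 ≤ ((Finset.univ.filter fun i => |x i| < 1).card : ℝ) := by
  have h1 : (n : ℝ) - ‖x‖ ^ 2 = ∑ i, (1 - x i ^ 2) := by
    rw [EuclideanSpace.real_norm_sq_eq]; simp
  rw [h1, Finset.card_eq_sum_ones, Nat.cast_sum, Nat.cast_one, Finset.sum_filter]
  refine Finset.sum_le_sum fun i _ => ?_
  split_ifs with h
  · nlinarith [sq_nonneg (x i)]
  · have : |x i| = 1 := le_antisymm (hx i) (not_lt.1 h)
    rw [← sq_abs, this]; norm_num

theorem norm_sq_lt_of_card_pos {n : ℕ} (x : EuclideanSpace ℝ (Fin n)) (hx : ∀ i, |x i| ≤ 1)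
    (hk : 0 < (Finset.univ.filter fun i => |x i| < 1).card) : ‖x‖ ^ 2 < n := by
  rw [EuclideanSpace.real_norm_sq_eq]
  obtain ⟨i, hi⟩ := Finset.card_pos.1 hk
  calc ∑ i, x i ^ 2 < ∑ i : Fin n, (1 : ℝ) :=
        Finset.sum_lt_sum (fun i _ => (sq_le_one_iff_abs_le_one _).2 (hx i))
          ⟨i, Finset.mem_univ _, (sq_lt_one_iff_abs_lt_one _).2 (Finset.mem_filter.1 hi).2⟩
    _ = n := by simp

theorem row_false {n : ℕ} (S : Fin n → Finset (Fin n)) (j : Fin n) :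
    row S (j, false) = -row S (j, true) := by
  ext i; simp only [row, PiLp.neg_apply]; split_ifs <;> simp_all

/-- Fewer than `r` sets can each carry more than the fraction `1 / r` of a potential that is at most
`2 / (81 n)`. -/
theorem card_exceptional_lt {n : ℕ} (S : Fin n → Finset (Fin n)) (x : EuclideanSpace ℝ (Fin n))
    (hspos : ∀ p, 0 < slack S x p) (hn' : (0 : ℝ) < n)
    (hpot : potential S x ≤ 2 / (81 * n)) {r : ℕ} (hr : 0 < r)
    (J : Finset (Fin n))
    (hJ : ∀ j ∈ J, ∃ σ, 2 / (81 * (n : ℝ)) < r * ((slack S x (j, σ)) ^ 4)⁻¹) :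
    J.card < r := by
  by_contra! hcon
  have hr0 : (0 : ℝ) < r := by exact_mod_cast hr
  have hJne : J.Nonempty := Finset.card_pos.1 (by omega)
  have h1 : ∑ j ∈ J, 2 / (81 * (n : ℝ)) < ∑ j ∈ J, r * ∑ σ, ((slack S x (j, σ)) ^ 4)⁻¹ := by
    refine Finset.sum_lt_sum_of_nonempty hJne fun j hj => ?_
    obtain ⟨σ, hσ⟩ := hJ j hj
    refine hσ.trans_le (mul_le_mul_of_nonneg_left ?_ hr0.le)
    exact Finset.single_le_sum (f := fun σ => ((slack S x (j, σ)) ^ 4)⁻¹)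
      (fun σ _ => by have := hspos (j, σ); positivity) (Finset.mem_univ σ)
  have h2 : ∑ j ∈ J, r * ∑ σ, ((slack S x (j, σ)) ^ 4)⁻¹ ≤ r * potential S x := by
    rw [← Finset.mul_sum, potential, Fintype.sum_prod_type]
    refine mul_le_mul_of_nonneg_left ?_ hr0.le
    refine Finset.sum_le_sum_of_subset_of_nonneg (Finset.subset_univ _) fun j _ _ => ?_
    exact Finset.sum_nonneg fun σ _ => by have := hspos (j, σ); positivity
  rw [Finset.sum_const, nsmul_eq_mul] at h1
  have h3 : (r : ℝ) * (2 / (81 * n)) ≤ J.card * (2 / (81 * n)) :=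
    mul_le_mul_of_nonneg_right (by exact_mod_cast hcon) (by positivity)
  have h4 : r * potential S x ≤ r * (2 / (81 * n)) := mul_le_mul_of_nonneg_left hpot hr0.le
  linarith

/-- The direction `δ` is supported on the fractional coordinates and orthogonal to `x`. Along it the
second-order coefficient of the symmetrized potential, as in `eventually_symmetrized_lt`, is
negative. -/
theorem exists_descent_direction {n : ℕ} (S : Fin n → Finset (Fin n))
    (x : EuclideanSpace ℝ (Fin n)) (hx : ∀ i, |x i| ≤ 1) (hspos : ∀ p, 0 < slack S x p)
    (hpot : potential S x ≤ 2 / (81 * n))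
    (hk : 3 ≤ (Finset.univ.filter fun i => |x i| < 1).card) :
    ∃ δ : EuclideanSpace ℝ (Fin n), ‖δ‖ = 1 ∧ inner ℝ x δ = 0 ∧ (∀ i, ¬ |x i| < 1 → δ i = 0) ∧
      ∑ p, (10 * (inner ℝ (row S p) δ) ^ 2 / slack S x p ^ 6
        - 4 * (2 / (fourthRoot n * fourthRoot (n - ‖x‖ ^ 2))) / slack S x p ^ 5) < 0 := by
  classical
  have hxn := norm_sq_lt_of_card_pos x hx (by omega)
  have hyk := sub_norm_sq_le_card x hx
  set A := Finset.univ.filter fun i => |x i| < 1 with hA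
  obtain ⟨k, hkA⟩ : ∃ k, k = A.card := ⟨_, rfl⟩
  obtain ⟨r, hr⟩ : ∃ r, r = k / 3 := ⟨_, rfl⟩
  have hkn : k ≤ n := by simpa [hkA] using Finset.card_le_univ A
  rw [← hkA] at hk hyk
  have hn : 0 < n := by omega
  have hn' : (0 : ℝ) < n := by exact_mod_cast hn
  -- The sets with a slack so small that its term alone exceeds the share `1 / r` of the budget
  -- `2 / (81 n)`.
  set J := Finset.univ.filter fun j => ∃ σ, 2 / (81 * (n : ℝ)) < r * ((slack S x (j, σ)) ^ 4)⁻¹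
    with hJ
  have hJr : J.card < r := card_exceptional_lt S x hspos hn' hpot (by omega) J
    fun j hj => (Finset.mem_filter.1 hj).2
  -- Orthogonality to `T` costs at most `1 + (r - 1) + (n - k)` dimensions.
  set T : Finset (EuclideanSpace ℝ (Fin n)) :=
    insert x (J.image (fun j => row S (j, true)) ∪
      Aᶜ.image fun i => EuclideanSpace.single i (1 : ℝ)) with hT
  have hTcard : T.card + (k - r) ≤ Module.finrank ℝ (EuclideanSpace ℝ (Fin n)) := by
    rw [finrank_euclideanSpace_fin]
    have h1 := Finset.card_insert_le x (J.image (fun j => row S (j, true)) ∪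
      Aᶜ.image fun i => EuclideanSpace.single i (1 : ℝ))
    have h2 := Finset.card_union_le (J.image (fun j => row S (j, true)))
      (Aᶜ.image fun i => EuclideanSpace.single i (1 : ℝ))
    have h3 := Finset.card_image_le (s := J) (f := fun j => row S (j, true))
    have h4 := Finset.card_image_le (s := Aᶜ)
      (f := fun i => (EuclideanSpace.single i (1 : ℝ) : EuclideanSpace ℝ (Fin n)))
    rw [Finset.card_compl, Fintype.card_fin, ← hkA] at h4
    rw [hT]
    omega
  set c : Fin n × Bool → ℝ := fun p => if p.1 ∈ J then 0 else 1 / slack S x p ^ 6 with hc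
  -- Restricting the rows to the fractional coordinates lowers their squared norms to at most `k`.
  set b : Fin n × Bool → EuclideanSpace ℝ (Fin n) := fun p =>
    WithLp.toLp 2 fun i => if i ∈ A then row S p i else 0 with hb
  have hbk : ∀ p, ‖b p‖ ^ 2 ≤ (k : ℝ) := by
    intro p
    rw [EuclideanSpace.real_norm_sq_eq, hkA, Finset.card_eq_sum_ones, Nat.cast_sum, Nat.cast_one,
      ← Finset.sum_filter_add_sum_filter_not Finset.univ (· ∈ A)]
    rw [Finset.sum_eq_zero (s := Finset.univ.filter fun i => ¬ i ∈ A)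
      (by intro i hi; simp [hb, (Finset.mem_filter.1 hi).2]), add_zero]
    simp only [Finset.filter_mem_eq_inter, Finset.univ_inter]
    refine Finset.sum_le_sum fun i hi => ?_
    simp only [hb, hi, row, if_true]
    split_ifs <;> norm_num
  have hc0 : ∀ p, 0 ≤ c p := by
    intro p
    have := hspos p
    simp only [hc]; split_ifs <;> positivity
  obtain ⟨δ, hδ1, hδT, hδ⟩ := exists_unit_orthogonal_small T (k - r) (by omega) hTcard c hc0 b k hbk
  have hδx : inner ℝ x δ = 0 := hδT x (Finset.mem_insert_self _ _)
  have hδA : ∀ i, i ∉ A → δ i = 0 := by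
    intro i hi
    have := hδT (EuclideanSpace.single i 1) (Finset.mem_insert_of_mem (Finset.mem_union_right _
      (Finset.mem_image_of_mem _ (Finset.mem_compl.2 hi))))
    simpa [EuclideanSpace.inner_single_left] using this
  have hδJ : ∀ p : Fin n × Bool, p.1 ∈ J → inner ℝ (row S p) δ = 0 := by
    rintro ⟨j, σ⟩ hj
    have h1 := hδT (row S (j, true)) (Finset.mem_insert_of_mem (Finset.mem_union_left _
      (Finset.mem_image_of_mem _ hj)))
    cases σ with
    | true => exact h1
    | false => rw [row_false, inner_neg_left, h1, neg_zero]
  have hδb : ∀ p, inner ℝ (b p) δ = inner ℝ (row S p) δ := by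
    intro p
    simp only [PiLp.inner_apply, hb]
    refine Finset.sum_congr rfl fun i _ => ?_
    split_ifs with h
    · rfl
    · simp [hδA i h]
  set g := 2 / (fourthRoot n * fourthRoot (n - ‖x‖ ^ 2)) with hg
  have hgpos : 0 < g := div_pos two_pos (mul_pos (fourthRoot_pos hn') (fourthRoot_pos (by linarith)))
  have hkr : (0 : ℝ) < (k : ℝ) - r := by
    have : r < k := by omega
    have : (r : ℝ) < k := by exact_mod_cast this
    linarith
  refine ⟨δ, hδ1, hδx, fun i hi => hδA i (by simpa [hA] using hi), ?_⟩
  have h1 : ∑ p, 10 * (inner ℝ (row S p) δ) ^ 2 / slack S x p ^ 6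
      = 10 * ∑ p, c p * (inner ℝ (b p) δ) ^ 2 := by
    rw [Finset.mul_sum]
    refine Finset.sum_congr rfl fun p _ => ?_
    rw [hδb]
    by_cases hp : p.1 ∈ J
    · simp [hδJ p hp]
    · simp only [hc, hp, if_false]; ring
  have h2 : ∑ p, c p * (inner ℝ (b p) δ) ^ 2 ≤ k / (k - r) * ∑ p, c p := by
    rw [Nat.cast_sub (by omega)] at hδ
    rw [div_mul_eq_mul_div, le_div_iff₀ hkr]
    linarith
  have h3 : ∑ p, 10 * ((k : ℝ) / (k - r)) * c p < ∑ p, 4 * g / slack S x p ^ 5 := by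
    refine Finset.sum_lt_sum_of_nonempty ⟨(⟨0, hn⟩, true), Finset.mem_univ _⟩ fun p _ => ?_
    have hsp := hspos p
    by_cases hp : p.1 ∈ J
    · simp only [hc, hp, if_true, mul_zero]; positivity
    · simp only [hc, hp, if_false]
      rw [mul_one_div]
      refine drift_dominates hn (by omega) (by omega) (by omega) (by linarith) hyk hsp ?_
      by_contra! hcon
      exact hp (Finset.mem_filter.2 ⟨Finset.mem_univ _, p.2, hcon⟩)
  rw [← Finset.mul_sum] at h3
  rw [Finset.sum_sub_distrib, h1]
  nlinarith

/-- The point `y` is one of `x ± ε δ` for a small `ε > 0`, with `δ` from `exists_descent_direction`. -/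
theorem exists_descent {n : ℕ} (S : Fin n → Finset (Fin n)) (x : EuclideanSpace ℝ (Fin n))
    (hx : ∀ i, |x i| ≤ 1) (hslack : ∀ p, 1 < slack S x p)
    (hpot : potential S x ≤ 2 / (81 * n))
    (hk : 3 ≤ (Finset.univ.filter fun i => |x i| < 1).card) :
    ∃ y : EuclideanSpace ℝ (Fin n), (∀ i, |y i| ≤ 1) ∧ (∀ p, 1 < slack S y p) ∧
      potential S y < potential S x := by
  classical
  have hn : 0 < n := by
    have := Finset.card_le_univ (Finset.univ.filter fun i => |x i| < 1)
    rw [Fintype.card_fin] at this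
    omega
  have hxn := norm_sq_lt_of_card_pos x hx (by omega)
  have hspos : ∀ p, 0 < slack S x p := fun p => one_pos.trans (hslack p)
  obtain ⟨δ, hδ1, hδx, hδA, hneg⟩ := exists_descent_direction S x hx hspos hpot hk
  set g := 2 / (fourthRoot n * fourthRoot (n - ‖x‖ ^ 2)) with hg
  have hlt := eventually_symmetrized_lt (slack S x) (fun p => inner ℝ (row S p) δ) g hspos hneg
  -- For small `ε` both points `x ± ε δ` stay in the cube and keep their slacks above `1`.
  have hgood : ∀ᶠ ε in 𝓝 (0 : ℝ), (∀ i, |(x + ε • δ) i| ≤ 1) ∧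
      (∀ p, 1 < slack S (x + ε • δ) p) ∧
      ∀ p, 0 < slack S x p + g * ε ^ 2 - ε * inner ℝ (row S p) δ := by
    refine Filter.Eventually.and (eventually_all.2 fun i => ?_)
      (Filter.Eventually.and (eventually_all.2 fun p => ?_) (eventually_all.2 fun p => ?_))
    · by_cases hi : |x i| < 1
      · have hcont : ContinuousAt (fun ε : ℝ => |(x + ε • δ) i|) 0 := by
          simp only [PiLp.add_apply, PiLp.smul_apply, smul_eq_mul]; fun_prop
        refine (hcont.eventually (gt_mem_nhds (?_ : _ < (1 : ℝ)))).mono fun ε h => h.le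
        simpa using hi
      · simp [hδA i hi, hx i]
    · have hcont : ContinuousAt (fun ε : ℝ => slack S (x + ε • δ) p) 0 :=
        ((continuous_slack S p).comp (by fun_prop : Continuous fun ε : ℝ => x + ε • δ)).continuousAt
      exact hcont.eventually (lt_mem_nhds (by simpa using hslack p))
    · have hcont : ContinuousAt
          (fun ε : ℝ => slack S x p + g * ε ^ 2 - ε * inner ℝ (row S p) δ) 0 := by fun_prop
      exact hcont.eventually (lt_mem_nhds (by simpa using hspos p))
  have hgood' : ∀ᶠ ε in 𝓝 (0 : ℝ), (∀ i, |(x + (-ε) • δ) i| ≤ 1) ∧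
      (∀ p, 1 < slack S (x + (-ε) • δ) p) ∧
      ∀ p, 0 < slack S x p + g * (-ε) ^ 2 - (-ε) * inner ℝ (row S p) δ := by
    have : Tendsto (fun ε : ℝ => -ε) (𝓝 0) (𝓝 0) := by
      simpa using (continuous_neg (G := ℝ)).tendsto 0
    exact this.eventually hgood
  obtain ⟨ε, hε, hε1, hε2⟩ :=
    (hlt.and (nhdsWithin_le_nhds (hgood.and hgood'))).exists
  have hbound : ∀ ε : ℝ, (∀ i, |(x + ε • δ) i| ≤ 1) →
      (∀ p, 0 < slack S x p + g * ε ^ 2 - ε * inner ℝ (row S p) δ) →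
      potential S (x + ε • δ) ≤
        ∑ p, ((slack S x p + g * ε ^ 2 - ε * inner ℝ (row S p) δ) ^ 4)⁻¹ := by
    intro ε h1 h2
    refine Finset.sum_le_sum fun p _ => ?_
    refine inv_anti₀ (pow_pos (h2 p) 4) (pow_le_pow_left₀ (h2 p).le ?_ 4)
    have := height_add_le hn x δ hδ1 hδx hxn ε (norm_sq_le_of_mem_cube _ h1)
    unfold slack
    rw [inner_add_right, inner_smul_right]
    linarith
  have hb1 := hbound ε hε1.1 hε1.2.2
  have hb2 := hbound (-ε) hε2.1 hε2.2.2
  rw [Finset.sum_add_distrib, ← Finset.mul_sum] at hε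
  simp only [neg_sq, neg_mul, sub_neg_eq_add] at hb2
  have hsum : potential S (x + ε • δ) + potential S (x + (-ε) • δ) < 2 * potential S x := by
    have : potential S x = ∑ p, (slack S x p ^ 4)⁻¹ := rfl
    linarith
  by_cases h : potential S (x + ε • δ) < potential S x
  · exact ⟨_, hε1.1, hε1.2.1, h⟩
  · exact ⟨_, hε2.1, hε2.2.1, by linarith⟩

/-! ### The minimizer and its rounding -/

/-- The point is a minimizer of the potential on the compact set of points of the cube with all
slacks at least `1`. On that set the potential is continuous. -/
theorem exists_nearly_integral {n : ℕ} (hn : 0 < n) (S : Fin n → Finset (Fin n)) :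
    ∃ x : EuclideanSpace ℝ (Fin n), (∀ i, |x i| ≤ 1) ∧ (∀ p, 1 < slack S x p) ∧
      (Finset.univ.filter fun i => |x i| < 1).card ≤ 2 := by
  classical
  have hn1 : (1 : ℝ) ≤ n := by exact_mod_cast hn
  set C : Set (EuclideanSpace ℝ (Fin n)) := {x | (∀ i, |x i| ≤ 1) ∧ ∀ p, 1 ≤ slack S x p} with hC
  have hclosed : IsClosed C := by
    have : C = (⋂ i, {x | |x i| ≤ 1}) ∩ ⋂ p, {x | 1 ≤ slack S x p} := by ext; simp [hC]
    rw [this]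
    exact (isClosed_iInter fun i => isClosed_le (by fun_prop) continuous_const).inter
      (isClosed_iInter fun p => isClosed_le continuous_const (continuous_slack S p))
  have hcompact : IsCompact C := by
    refine Metric.isCompact_of_isClosed_isBounded hclosed ?_
    refine (Metric.isBounded_closedBall (x := 0) (r := √n)).subset fun x hx => ?_
    rw [mem_closedBall_zero_iff, EuclideanSpace.norm_eq]
    refine Real.sqrt_le_sqrt ?_
    calc ∑ i, ‖x i‖ ^ 2 ≤ ∑ i : Fin n, (1 : ℝ) :=
          Finset.sum_le_sum fun i _ => pow_le_one₀ (norm_nonneg _) (hx.1 i)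
      _ = n := by simp
  have hslack0 : ∀ p, slack S 0 p = 3 * fourthRoot n ^ 2 := by
    intro p; simp [slack, height]
  have hQ4 := fourthRoot_pow (y := n) (by linarith)
  have hQ2 : 1 ≤ fourthRoot n ^ 2 := by
    by_contra! h
    nlinarith [sq_nonneg (fourthRoot n)]
  have h0 : (0 : EuclideanSpace ℝ (Fin n)) ∈ C := by
    refine ⟨by simp, fun p => ?_⟩
    rw [hslack0]; linarith
  have hcont : ContinuousOn (potential S) C := by
    unfold potential
    refine continuousOn_finsetSum _ fun p _ => ContinuousOn.inv₀ (by fun_prop) fun x hx => ?_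
    have := hx.2 p
    positivity
  obtain ⟨x, hxC, hmin⟩ := hcompact.exists_isMinOn ⟨0, h0⟩ hcont
  have hpot0 : potential S 0 = 2 / (81 * n) := by
    simp only [potential, hslack0, mul_pow, ← pow_mul]
    rw [show 2 * 4 = 4 * 2 from rfl, pow_mul, hQ4]
    simp
    field_simp
    norm_num
  have hpot : potential S x ≤ 2 / (81 * n) := hpot0 ▸ hmin h0
  have hslack : ∀ p, 1 < slack S x p := by
    intro p
    refine lt_of_le_of_ne (hxC.2 p) fun h => ?_
    have h1 : ((slack S x p) ^ 4)⁻¹ ≤ potential S x :=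
      Finset.single_le_sum (f := fun p => ((slack S x p) ^ 4)⁻¹)
        (fun q _ => by have := hxC.2 q; positivity) (Finset.mem_univ p)
    rw [← h] at h1
    have h2 : 2 / (81 * (n : ℝ)) < 1 := by rw [div_lt_one (by positivity)]; linarith
    norm_num at h1
    linarith
  refine ⟨x, hxC.1, hslack, ?_⟩
  by_contra! hk
  obtain ⟨y, hy1, hy2, hy3⟩ := exists_descent S x hxC.1 hslack hpot hk
  exact absurd hy3 (not_lt.2 (hmin (⟨hy1, fun p => (hy2 p).le⟩ : y ∈ C)))

theorem height_le {n : ℕ} (hn : 0 < n) (x : EuclideanSpace ℝ (Fin n)) :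
    height x ≤ 17 / 3 * √n := by
  have hQ : 0 < fourthRoot n := fourthRoot_pos (by exact_mod_cast hn)
  have hsq : fourthRoot n ^ 2 = √n := Real.sq_sqrt (Real.sqrt_nonneg _)
  have hr := pow_nonneg (fourthRoot_nonneg (n - ‖x‖ ^ 2)) 3
  unfold height
  rw [← hsq]
  have h1 := mul_le_mul_of_nonneg_left (sub_le_self (fourthRoot n ^ 3) hr)
    (by positivity : 0 ≤ 8 / (3 * fourthRoot n))
  have h2 : 8 / (3 * fourthRoot n) * fourthRoot n ^ 3 = 8 / 3 * fourthRoot n ^ 2 := by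
    field_simp
  linarith

/-- **Spencer's Six Standard Deviations theorem**: for any system of `n` sets on a universe of
`n` points, there exists a coloring `χ : [n] → {-1,1}` such that every set has discrepancy at
most `6√n`. -/
theorem spencer_six_standard_deviations (n : ℕ) (hn : 0 < n)
    (S : Fin n → Finset (Fin n)) :
    ∃ χ : Fin n → ℤ, (∀ i, χ i = 1 ∨ χ i = -1) ∧
      ∀ j : Fin n, |(∑ i ∈ S j, χ i : ℝ)| ≤ 6 * Real.sqrt n := by
  classical
  obtain ⟨x, hx, hslack, hfew⟩ := exists_nearly_integral hn S
  set A := Finset.univ.filter fun i => |x i| < 1 with hA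
  refine ⟨fun i => if 0 ≤ x i then 1 else -1, fun i => by simp only; split_ifs <;> simp,
    fun j => ?_⟩
  have hsqrt : √(n : ℝ) ^ 2 = n := Real.sq_sqrt (Nat.cast_nonneg n)
  have hsqrt0 := Real.sqrt_nonneg (n : ℝ)
  rcases le_or_gt (√(n : ℝ)) 6 with hsmall | hlarge
  -- Here `n ≤ 36`: the trivial bound `n` is at most `6 √n`.
  · calc |(∑ i ∈ S j, ((if 0 ≤ x i then 1 else -1 : ℤ) : ℝ))|
        ≤ ∑ i ∈ S j, |((if 0 ≤ x i then 1 else -1 : ℤ) : ℝ)| := Finset.abs_sum_le_sum_abs _ _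
      _ = (S j).card := by
        rw [Finset.card_eq_sum_ones, Nat.cast_sum]
        exact Finset.sum_congr rfl fun i _ => by split_ifs <;> simp
      _ ≤ n := by exact_mod_cast (by simpa using Finset.card_le_univ (S j))
      _ ≤ 6 * √n := by nlinarith
  · have hround : |∑ i ∈ S j, (((if 0 ≤ x i then 1 else -1 : ℤ) : ℝ) - x i)| ≤ 2 := by
      calc |∑ i ∈ S j, (((if 0 ≤ x i then 1 else -1 : ℤ) : ℝ) - x i)|
          ≤ ∑ i ∈ S j, |((if 0 ≤ x i then 1 else -1 : ℤ) : ℝ) - x i| :=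
            Finset.abs_sum_le_sum_abs _ _
        _ ≤ ∑ i, |((if 0 ≤ x i then 1 else -1 : ℤ) : ℝ) - x i| :=
            Finset.sum_le_sum_of_subset_of_nonneg (Finset.subset_univ _)
              fun _ _ _ => abs_nonneg _
        _ ≤ ∑ i, if |x i| < 1 then (1 : ℝ) else 0 := by
            refine Finset.sum_le_sum fun i _ => ?_
            have hi := abs_le.1 (hx i)
            split_ifs with h1 h2 h2
            · rw [abs_le]; constructor <;> push_cast <;> linarith
            · have : x i = 1 := by
                rw [abs_of_nonneg h1] at h2; linarith
              simp [this]
            · rw [abs_le]; constructor <;> push_cast <;> linarith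
            · have : x i = -1 := by
                rw [abs_of_neg (not_le.1 h1)] at h2; linarith
              simp [this]
        _ = A.card := by rw [Finset.card_eq_sum_ones, Nat.cast_sum, hA, Finset.sum_filter]; simp
        _ ≤ 2 := by exact_mod_cast hfew
    have hrow : ∀ σ, inner ℝ (row S (j, σ)) x = (if σ then 1 else -1) * ∑ i ∈ S j, x i := by
      intro σ
      rw [PiLp.inner_apply, Finset.mul_sum, ← Finset.sum_filter_add_sum_filter_not Finset.univ (· ∈ S j)]
      rw [Finset.sum_eq_zero (s := Finset.univ.filter fun i => ¬ i ∈ S j)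
        (by intro i hi; simp [row, (Finset.mem_filter.1 hi).2]), add_zero]
      simp only [Finset.filter_mem_eq_inter, Finset.univ_inter]
      refine Finset.sum_congr rfl fun i hi => ?_
      simp [row, hi, mul_comm]
    have ht := hslack (j, true)
    have hf := hslack (j, false)
    have hh := height_le hn x
    simp only [slack, hrow, if_true, Bool.false_eq_true, if_false] at ht hf
    rw [Finset.sum_sub_distrib] at hround
    rw [abs_le] at hround ⊢
    constructor <;> linarith [hround.1, hround.2]
end

section
/- There exists a universal constant K > 0 such that for all positive integers n and m with m ≥ 2n, and any system of sets S₁, ..., Sₘ ⊆ {1, ..., n}, there exists a coloring χ : {1, ..., n} → {-1, 1} such that for every j ∈ {1, ..., m}, |∑_{i ∈ Sⱼ} χ(i)| ≤ K·√(n·log₂(m/n)). -/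
/-!
The proof is the entropy (partial colouring) method, in a counting form.

*Partial colouring.* Let `r` points and `M ≥ r` vectors `v j ∈ [-1, 1]^r` be given, and put
`L = log (100 M / r)`, `D = 4 √(r L)`. To a sign vector `χ` attach the integer vector
`b χ j = round (⟨v j, χ⟩ / D)`. If `b χ = b χ'`, then `(χ - χ') / 2` has entries in `{-1, 0, 1}` and
discrepancy at most `D / 2`, so it suffices to find such a pair at Hamming distance at least
`r / 16`. Otherwise each fibre of `b` lies in a Hamming ball of radius `r / 16` and has at most
`(13/10)^r` elements (`card_le_of_hammingDist`). Weigh an integer vector `b` by `exp (-L ∑ⱼ |b j|)`.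
The total weight of all integer vectors is at most `(1 + 3 exp (-L))^M` (`sum_weight_le`), so the
weights of `b χ`, summed over all `χ`, are at most `(13/10)^r exp (3 M exp (-L))`. The subgaussian
estimate `sum_abs_round_le` gives mean of `|b χ j|` at most `2 exp (-2 L)`, so by Jensen the same sum
is at least `2^r exp (-2 M exp (-L))`, because `L exp (-L) ≤ 1`. As `M exp (-L) = r / 100`, this contradicts
`1.3 * exp (1/20) < 2`.

*Iteration.* Recolouring the uncoloured points repeatedly, their number drops by a factor `15/16`
in each step, and `r log (100 m / r)` drops by a factor `0.95` (`decay`), so the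
discrepancy bounds of the successive steps are dominated by a geometric series.
-/

/-! ### Counting sign vectors -/

/-- The sign of a Boolean, `true ↦ 1` and `false ↦ -1`; colourings are encoded as maps to `Bool`. -/
def boolSign (b : Bool) : ℤ := if b then 1 else -1

/-- A set of sign vectors of diameter at most `r / 16` is small: bound the indicator of a ball
of that radius by `p ^ (16 * dist - r)` with `p = 7/8` and sum over the whole cube. -/
lemma card_le_of_hammingDist {ι : Type*} [Fintype ι] [DecidableEq ι]
    (F : Finset (ι → Bool))
    (hF : ∀ χ ∈ F, ∀ χ' ∈ F, 16 * hammingDist χ χ' ≤ Fintype.card ι) :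
    (F.card : ℝ) ≤ (13 / 10 : ℝ) ^ Fintype.card ι := by
  rcases F.eq_empty_or_nonempty with rfl | ⟨χ, hχ⟩
  · rw [Finset.card_empty, Nat.cast_zero]
    positivity
  set r := Fintype.card ι
  have key : ∑ χ' : ι → Bool, ((7 / 8 : ℝ) ^ 16) ^ hammingDist χ χ'
      = (1 + (7 / 8 : ℝ) ^ 16) ^ r := by
    have h1 : ∀ χ' : ι → Bool, ((7 / 8 : ℝ) ^ 16) ^ hammingDist χ χ'
        = ∏ i, (if χ i ≠ χ' i then (7 / 8 : ℝ) ^ 16 else 1) := by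
      intro χ'
      rw [Finset.prod_ite, Finset.prod_const, Finset.prod_const_one, mul_one]
      rfl
    simp_rw [h1]
    have h2 := Finset.prod_univ_sum (fun _ : ι => (Finset.univ : Finset Bool))
      (fun i s => if χ i ≠ s then (7 / 8 : ℝ) ^ 16 else 1)
    rw [Fintype.piFinset_univ] at h2
    rw [← h2]
    have h3 : ∀ i, ∑ s : Bool, (if χ i ≠ s then (7 / 8 : ℝ) ^ 16 else 1)
        = 1 + (7 / 8 : ℝ) ^ 16 := by
      intro i
      cases χ i <;> simp [add_comm]
    rw [Finset.prod_congr rfl (fun i _ => h3 i), Finset.prod_const]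
    rfl
  have hp : (0 : ℝ) < (7 / 8 : ℝ) ^ r := by positivity
  have h4 : (F.card : ℝ) * (7 / 8 : ℝ) ^ r ≤ (1 + (7 / 8 : ℝ) ^ 16) ^ r := by
    rw [← key, ← nsmul_eq_mul, ← Finset.sum_const]
    calc ∑ χ' ∈ F, (7 / 8 : ℝ) ^ r
        ≤ ∑ χ' ∈ F, ((7 / 8 : ℝ) ^ 16) ^ hammingDist χ χ' := by
          apply Finset.sum_le_sum
          intro χ' hχ'
          rw [← pow_mul]
          exact pow_le_pow_of_le_one (by norm_num) (by norm_num) (hF χ hχ χ' hχ')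
      _ ≤ _ := Finset.sum_le_sum_of_subset_of_nonneg (Finset.subset_univ _)
          (fun _ _ _ => by positivity)
  have h5 : (1 + (7 / 8 : ℝ) ^ 16) ^ r ≤ (13 / 10 : ℝ) ^ r * (7 / 8 : ℝ) ^ r := by
    rw [← mul_pow]
    exact pow_le_pow_left₀ (by positivity) (by norm_num) r
  exact le_of_mul_le_mul_right (h4.trans h5) hp

/-- Subgaussian moment generating function of a signed sum, unnormalised. -/
lemma sum_exp_le {ι : Type*} [Fintype ι] [DecidableEq ι] (v : ι → ℝ)
    (hv : ∀ i, |v i| ≤ 1) (t : ℝ) :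
    ∑ χ : ι → Bool, Real.exp (t * ∑ i, v i * (boolSign (χ i) : ℝ))
      ≤ 2 ^ Fintype.card ι * Real.exp (Fintype.card ι * (t ^ 2 / 2)) := by
  simp_rw [Finset.mul_sum, Real.exp_sum]
  have h2 := Finset.prod_univ_sum (fun _ : ι => (Finset.univ : Finset Bool))
    (fun i s => Real.exp (t * (v i * (boolSign s : ℝ))))
  rw [Fintype.piFinset_univ] at h2
  rw [← h2, Real.exp_nat_mul, ← mul_pow, ← Finset.card_univ, ← Finset.prod_const]
  apply Finset.prod_le_prod
  · intro i _
    positivity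
  · intro i _
    have h3 : ∑ s : Bool, Real.exp (t * (v i * (boolSign s : ℝ))) = 2 * Real.cosh (t * v i) := by
      rw [Real.cosh_eq]
      simp [boolSign]
      ring
    rw [h3]
    have h4 := Real.cosh_le_exp_half_sq (t * v i)
    have h5 : (v i) ^ 2 ≤ 1 := (sq_le_one_iff_abs_le_one _).2 (hv i)
    have h6 : Real.exp ((t * v i) ^ 2 / 2) ≤ Real.exp (t ^ 2 / 2) := by
      apply Real.exp_le_exp.2
      rw [mul_pow]
      nlinarith [sq_nonneg t]
    linarith

/-- Rounding to the nearest integer vanishes on `(-1/2, 1/2)`, hence is dominated by a shifted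
exponential. -/
lemma abs_round_le {a y : ℝ} (ha : 1 ≤ a) :
    |(round y : ℝ)| ≤ Real.exp (-(a / 2)) * (Real.exp (a * y) + Real.exp (-a * y)) := by
  by_cases h0 : round y = 0
  · rw [h0]
    simp
    positivity
  have h1 : |(round y : ℝ)| ≤ |y| + 1 / 2 := by
    have h := abs_sub_round y
    have := abs_sub_abs_le_abs_sub (round y : ℝ) y
    rw [abs_sub_comm] at this
    linarith
  have h2 : (1 : ℝ) ≤ |(round y : ℝ)| := by
    exact_mod_cast Int.one_le_abs h0
  have h3 : |y| + 1 / 2 ≤ Real.exp (a * (|y| - 1 / 2)) := by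
    have := Real.add_one_le_exp (a * (|y| - 1 / 2))
    nlinarith
  have h4 : Real.exp (a * (|y| - 1 / 2)) = Real.exp (-(a / 2)) * Real.exp (a * |y|) := by
    rw [← Real.exp_add]
    ring_nf
  have h5 : Real.exp (a * |y|) ≤ Real.exp (a * y) + Real.exp (-a * y) := by
    rcases abs_cases y with ⟨h, _⟩ | ⟨h, _⟩ <;> rw [h]
    · linarith [Real.exp_pos (-a * y)]
    · have : a * -y = -a * y := by ring
      rw [this]
      linarith [Real.exp_pos (a * y)]
  calc _ ≤ Real.exp (a * (|y| - 1 / 2)) := h1.trans h3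
    _ = _ := h4
    _ ≤ _ := by gcongr

/-- The rounded signed sum at scale `4 √(r L)` has mean absolute value at most `2 exp (-2 L)`. -/
lemma sum_abs_round_le {ι : Type*} [Fintype ι] [DecidableEq ι] [Nonempty ι] (v : ι → ℝ)
    (hv : ∀ i, |v i| ≤ 1) {L : ℝ} (hL : 1 ≤ L) :
    ∑ χ : ι → Bool, |(round ((∑ i, v i * (boolSign (χ i) : ℝ)) /
        (4 * √(Fintype.card ι * L))) : ℝ)|
      ≤ 2 ^ Fintype.card ι * (2 * Real.exp (-(2 * L))) := by
  have hr : (0 : ℝ) < Fintype.card ι := by exact_mod_cast Fintype.card_pos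
  set r := Fintype.card ι
  set D := 4 * √(r * L) with hD
  have hDpos : 0 < D := by positivity
  have hD2 : D ^ 2 = 16 * (r * L) := by
    rw [hD, mul_pow, Real.sq_sqrt (by positivity)]
    norm_num
  -- The exponent `8 L` optimises the Chernoff bound `-a / 2 + a ^ 2 * r / (2 * D ^ 2)` over `a`.
  have hexp : (r : ℝ) * ((8 * L / D) ^ 2 / 2) = 2 * L := by
    rw [div_pow, hD2]
    field_simp
    ring
  have hm1 := sum_exp_le v hv (8 * L / D)
  have hm2 := sum_exp_le v hv (-(8 * L / D))
  rw [neg_sq] at hm2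
  rw [hexp] at hm1 hm2
  calc _ ≤ ∑ χ : ι → Bool, Real.exp (-(8 * L / 2)) *
        (Real.exp (8 * L / D * ∑ i, v i * (boolSign (χ i) : ℝ))
          + Real.exp (-(8 * L / D) * ∑ i, v i * (boolSign (χ i) : ℝ))) := by
        apply Finset.sum_le_sum
        intro χ _
        have h := abs_round_le (a := 8 * L)
          (y := (∑ i, v i * (boolSign (χ i) : ℝ)) / D) (by linarith)
        rwa [mul_div_left_comm, mul_comm _ (8 * L / D), mul_div_left_comm,
          mul_comm _ (-(8 * L) / D), neg_div] at h
    _ ≤ Real.exp (-(8 * L / 2)) * (2 ^ r * Real.exp (2 * L) + 2 ^ r * Real.exp (2 * L)) := by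
        rw [← Finset.mul_sum, Finset.sum_add_distrib]
        gcongr
    _ = 2 ^ r * (2 * (Real.exp (-(8 * L / 2)) * Real.exp (2 * L))) := by ring
    _ = _ := by
        rw [← Real.exp_add]
        congr 3
        ring

/-! ### Counting integer vectors -/

lemma sum_pow_natAbs_le {q : ℝ} (hq0 : 0 ≤ q) (hq : q ≤ 1 / 100) (B : Finset ℤ) :
    ∑ s ∈ B, q ^ s.natAbs ≤ 1 + 3 * q := by
  have hgeo : HasSum (fun k : ℕ => q ^ k) (1 - q)⁻¹ :=
    hasSum_geometric_of_lt_one hq0 (by linarith)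
  have hgeo' : HasSum (fun k : ℕ => q ^ (k + 1)) ((1 - q)⁻¹ * q) := by
    simpa [pow_succ] using hgeo.mul_right q
  have hZ : HasSum (fun s : ℤ => q ^ s.natAbs) ((1 - q)⁻¹ + (1 - q)⁻¹ * q) := by
    apply HasSum.of_nat_of_neg_add_one
    · simpa using hgeo
    · have h : ∀ k : ℕ, (-((k : ℤ) + 1)).natAbs = k + 1 := by omega
      simpa only [h] using hgeo'
  refine (sum_le_hasSum B (fun _ _ => by positivity) hZ).trans ?_
  have h1 : (0 : ℝ) < 1 - q := by linarith
  have : (1 - q)⁻¹ + (1 - q)⁻¹ * q = (1 + q) / (1 - q) := by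
    field_simp
  rw [this, div_le_iff₀ h1]
  nlinarith

lemma sum_weight_le {κ : Type*} [Fintype κ] [DecidableEq κ] {q : ℝ}
    (hq0 : 0 ≤ q) (hq : q ≤ 1 / 100) (B : Finset (κ → ℤ)) :
    ∑ b ∈ B, ∏ j, q ^ (b j).natAbs ≤ (1 + 3 * q) ^ Fintype.card κ := by
  have hsub : B ⊆ Fintype.piFinset (fun j => B.image (fun b => b j)) := by
    intro b hb
    rw [Fintype.mem_piFinset]
    intro j
    exact Finset.mem_image_of_mem (fun b => b j) hb
  calc _ ≤ ∑ b ∈ Fintype.piFinset (fun j => B.image (fun b => b j)), ∏ j, q ^ (b j).natAbs :=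
        Finset.sum_le_sum_of_subset_of_nonneg hsub (fun _ _ _ => by positivity)
    _ = ∏ j, ∑ s ∈ B.image (fun b => b j), q ^ s.natAbs :=
        (Finset.prod_univ_sum _ (fun (_ : κ) (s : ℤ) => q ^ s.natAbs)).symm
    _ ≤ ∏ _j : κ, (1 + 3 * q) :=
        Finset.prod_le_prod (fun _ _ => by positivity)
          (fun _ _ => sum_pow_natAbs_le hq0 hq _)
    _ = _ := by simp

/-! ### Partial colourings -/

/-- Some two sign vectors with the same rounded discrepancies are at Hamming distance more than
`r / 16`. -/
lemma exists_far_pair {ι κ : Type*} [Fintype ι] [DecidableEq ι] [Nonempty ι] [Fintype κ]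
    [DecidableEq κ] (v : κ → ι → ℝ) (hv : ∀ j i, |v j i| ≤ 1) {L : ℝ}
    (hL1 : 1 ≤ L) (hq : Real.exp (-L) ≤ 1 / 100)
    (hLM : (Fintype.card κ : ℝ) * Real.exp (-L) = Fintype.card ι / 100) :
    ∃ χ χ' : ι → Bool, Fintype.card ι < 16 * hammingDist χ χ' ∧
      ∀ j, round ((∑ i, v j i * (boolSign (χ i) : ℝ)) / (4 * √(Fintype.card ι * L)))
        = round ((∑ i, v j i * (boolSign (χ' i) : ℝ)) / (4 * √(Fintype.card ι * L))) := by
  set r := Fintype.card ι with hr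
  set M := Fintype.card κ with hM
  set b : (ι → Bool) → κ → ℤ := fun χ j =>
    round ((∑ i, v j i * (boolSign (χ i) : ℝ)) / (4 * √(r * L))) with hb
  by_contra! hcon
  have hclose : ∀ χ χ', b χ = b χ' → 16 * hammingDist χ χ' ≤ r := by
    intro χ χ' h
    by_contra! h'
    obtain ⟨j, hj⟩ := hcon χ χ' h'
    exact hj (congrFun h j)
  set q := Real.exp (-L) with hqdef
  have hq0 : 0 ≤ q := (Real.exp_pos _).le
  have hrpos : 0 < r := Fintype.card_pos
  let w : (κ → ℤ) → ℝ := fun c => ∏ j, q ^ (c j).natAbs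
  have hw0 : ∀ c, 0 ≤ w c := fun c => by positivity
  have hupper : ∑ χ, w (b χ) ≤ (13 / 10 : ℝ) ^ r * (1 + 3 * q) ^ M := by
    rw [← Finset.sum_fiberwise_of_maps_to
      (fun χ _ => Finset.mem_image_of_mem b (Finset.mem_univ χ))]
    calc _ = ∑ c ∈ Finset.univ.image b, ((Finset.univ.filter (fun χ => b χ = c)).card : ℝ) * w c := by
          apply Finset.sum_congr rfl
          intro c _
          rw [← nsmul_eq_mul, ← Finset.sum_const]
          apply Finset.sum_congr rfl
          intro χ hχ
          rw [(Finset.mem_filter.1 hχ).2]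
      _ ≤ ∑ c ∈ Finset.univ.image b, (13 / 10 : ℝ) ^ r * w c := by
          apply Finset.sum_le_sum
          intro c _
          apply mul_le_mul_of_nonneg_right _ (hw0 c)
          apply card_le_of_hammingDist
          intro χ hχ χ' hχ'
          apply hclose
          rw [(Finset.mem_filter.1 hχ).2, (Finset.mem_filter.1 hχ').2]
      _ = (13 / 10 : ℝ) ^ r * ∑ c ∈ Finset.univ.image b, w c := by rw [Finset.mul_sum]
      _ ≤ _ := by
          gcongr
          exact sum_weight_le hq0 hq _
  have hwexp : ∀ c, w c = Real.exp (-(L * ∑ j, |(c j : ℝ)|)) := by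
    intro c
    rw [Finset.mul_sum, ← Finset.sum_neg_distrib, Real.exp_sum]
    apply Finset.prod_congr rfl
    intro j _
    rw [hqdef, ← Real.exp_nat_mul, Nat.cast_natAbs, Int.cast_abs]
    ring_nf
  set μ := 2 * M * q with hμ
  have hmean : ∑ χ, L * ∑ j, |(b χ j : ℝ)| ≤ 2 ^ r * μ := by
    rw [← Finset.mul_sum, Finset.sum_comm]
    have h1 : ∑ j, ∑ χ, |(b χ j : ℝ)| ≤ ∑ _j : κ, 2 ^ r * (2 * Real.exp (-(2 * L))) :=
      Finset.sum_le_sum (fun j _ => sum_abs_round_le (v j) (hv j) hL1)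
    rw [Finset.sum_const, nsmul_eq_mul, Finset.card_univ] at h1
    have h2 : L * q ≤ 1 := by
      have h := Real.add_one_le_exp L
      have h' : Real.exp L * q = 1 := by rw [hqdef, ← Real.exp_add]; simp
      nlinarith
    have h3 : Real.exp (-(2 * L)) = q * q := by
      rw [hqdef, ← Real.exp_add]
      ring_nf
    calc _ ≤ L * ((M : ℝ) * (2 ^ r * (2 * Real.exp (-(2 * L))))) := by gcongr
      _ = 2 ^ r * (2 * M * q) * (L * q) := by rw [h3]; ring
      _ ≤ 2 ^ r * (2 * M * q) * 1 := by gcongr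
      _ = _ := by rw [mul_one]
  -- Jensen's inequality, by summing the tangent line of `exp (-x)` at `μ`.
  have hlower : 2 ^ r * Real.exp (-μ) ≤ ∑ χ, w (b χ) := by
    have h1 : ∀ χ, Real.exp (-μ) * (1 + μ - L * ∑ j, |(b χ j : ℝ)|) ≤ w (b χ) := by
      intro χ
      rw [hwexp]
      have h := Real.add_one_le_exp (μ - L * ∑ j, |(b χ j : ℝ)|)
      calc _ ≤ Real.exp (-μ) * Real.exp (μ - L * ∑ j, |(b χ j : ℝ)|) := by
            gcongr
            linarith
        _ = _ := by
            rw [← Real.exp_add]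
            ring_nf
    refine le_trans ?_ (Finset.sum_le_sum (fun χ _ => h1 χ))
    rw [← Finset.mul_sum, Finset.sum_sub_distrib, Finset.sum_const, nsmul_eq_mul,
      Finset.card_univ, Fintype.card_fun, Fintype.card_bool]
    push_cast
    have := Real.exp_pos (-μ)
    nlinarith
  have h3q : (1 + 3 * q) ^ M ≤ Real.exp (3 * M * q) := by
    have h : 1 + 3 * q ≤ Real.exp (3 * q) := by linarith [Real.add_one_le_exp (3 * q)]
    calc (1 + 3 * q) ^ M ≤ Real.exp (3 * q) ^ M := pow_le_pow_left₀ (by positivity) h M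
      _ = _ := by
          rw [← Real.exp_nat_mul]
          ring_nf
  have hfin : (2 : ℝ) ^ r ≤ (13 / 10 : ℝ) ^ r * Real.exp (1 / 20) ^ r := by
    have e1 : Real.exp (1 / 20) ^ r = Real.exp (3 * M * q) * Real.exp μ := by
      rw [← Real.exp_nat_mul, ← Real.exp_add, hμ]
      congr 1
      linarith
    have e2 : Real.exp (-μ) * Real.exp μ = 1 := by rw [← Real.exp_add]; simp
    calc (2 : ℝ) ^ r = 2 ^ r * Real.exp (-μ) * Real.exp μ := by rw [mul_assoc, e2, mul_one]
      _ ≤ ((13 / 10 : ℝ) ^ r * (1 + 3 * q) ^ M) * Real.exp μ := by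
          exact mul_le_mul_of_nonneg_right (hlower.trans hupper) (Real.exp_pos _).le
      _ ≤ ((13 / 10 : ℝ) ^ r * Real.exp (3 * M * q)) * Real.exp μ := by gcongr
      _ = _ := by rw [e1]; ring
  have he : Real.exp (1 / 20) < 3 / 2 := by
    have h := Real.exp_bound_div_one_sub_of_interval (x := 1 / 20) (by norm_num) (by norm_num)
    norm_num at h ⊢
    linarith
  rw [← mul_pow] at hfin
  have : (13 / 10 * Real.exp (1 / 20)) ^ r < 2 ^ r :=
    pow_lt_pow_left₀ (by linarith) (by positivity) hrpos.ne'
  linarith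

/-- A partial colouring, with uncoloured points marked `0`, that colours at least `1/16` of the
points: half the difference of the two sign vectors from `exists_far_pair`. -/
lemma partial_coloring_s2 {ι κ : Type*} [Fintype ι] [DecidableEq ι] [Nonempty ι] [Fintype κ]
    [DecidableEq κ] (v : κ → ι → ℝ) (hv : ∀ j i, |v j i| ≤ 1)
    (hcard : Fintype.card ι ≤ Fintype.card κ) :
    ∃ y : ι → ℤ, (∀ i, y i = 0 ∨ y i = 1 ∨ y i = -1) ∧
      Fintype.card ι ≤ 16 * (Finset.univ.filter (fun i => y i ≠ 0)).card ∧
      ∀ j, |∑ i, v j i * (y i : ℝ)| ≤ 2 * √(Fintype.card ι *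
        Real.log (100 * Fintype.card κ / Fintype.card ι)) := by
  have hr : (0 : ℝ) < Fintype.card ι := by exact_mod_cast Fintype.card_pos
  have hM : (Fintype.card ι : ℝ) ≤ Fintype.card κ := by exact_mod_cast hcard
  set L := Real.log (100 * Fintype.card κ / Fintype.card ι) with hLdef
  have hQ : (100 : ℝ) ≤ 100 * Fintype.card κ / Fintype.card ι := by
    rw [le_div_iff₀ hr]
    linarith
  have hq : Real.exp (-L) = Fintype.card ι / (100 * Fintype.card κ) := by
    rw [Real.exp_neg, hLdef, Real.exp_log (by linarith), inv_div]
  have hMpos : (0 : ℝ) < Fintype.card κ := hr.trans_le hM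
  have hL1 : 1 ≤ L := by
    rw [hLdef, Real.le_log_iff_exp_le (by linarith)]
    linarith [Real.exp_one_lt_three]
  obtain ⟨χ, χ', hfar, hround⟩ := exists_far_pair v hv hL1
    (by rw [hq, div_le_iff₀ (by positivity)]; linarith)
    (by rw [hq]; field_simp)
  set D := 4 * √(Fintype.card ι * L) with hD
  have hDpos : 0 < D := by positivity
  refine ⟨fun i => if χ i = χ' i then 0 else boolSign (χ i), ?_, ?_, ?_⟩
  · intro i
    by_cases h : χ i = χ' i
    · simp [h]
    · cases h2 : χ i <;> (simp only [boolSign]; split_ifs <;> simp)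
  · refine hfar.le.trans (le_of_eq ?_)
    unfold hammingDist
    congr 2
    ext i
    cases h1 : χ i <;> cases h2 : χ' i <;> simp [h1, h2, boolSign]
  · intro j
    have hdiff : ∑ i, v j i * (((if χ i = χ' i then 0 else boolSign (χ i) : ℤ)) : ℝ)
        = ((∑ i, v j i * (boolSign (χ i) : ℝ)) - ∑ i, v j i * (boolSign (χ' i) : ℝ)) / 2 := by
      rw [← Finset.sum_sub_distrib, Finset.sum_div]
      apply Finset.sum_congr rfl
      intro i _
      cases χ i <;> cases χ' i <;> (simp [boolSign]; try ring)
    rw [hdiff]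
    set X := ∑ i, v j i * (boolSign (χ i) : ℝ)
    set X' := ∑ i, v j i * (boolSign (χ' i) : ℝ)
    have h1 := abs_sub_round (X / D)
    have h2 := abs_sub_round (X' / D)
    rw [hround j] at h1
    have h3 : |X / D - X' / D| ≤ 1 := by
      rw [abs_le] at h1 h2 ⊢
      constructor <;> linarith [h1.1, h1.2, h2.1, h2.2]
    rw [← sub_div, abs_div, abs_of_pos hDpos, div_le_one hDpos] at h3
    rw [abs_div, abs_two]
    linarith

/-! ### Iteration -/

/-- With `u = s / r ≤ 15/16`, this is `u + u log (1/u) / log (Q/r) ≤ u + (1 - u) / 5 ≤ 19/20`. -/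
lemma decay {Q r s : ℝ} (hs : 0 < s) (hr : 0 < r) (hsr : 16 * s ≤ 15 * r)
    (hQ : 200 * r ≤ Q) :
    s * Real.log (Q / s) ≤ 19 / 20 * (r * Real.log (Q / r)) := by
  have hQpos : 0 < Q := by linarith
  have h1 : Real.log (Q / s) = Real.log (Q / r) + Real.log (r / s) := by
    rw [← Real.log_mul (by positivity) (by positivity)]
    congr 1
    field_simp
  have h2 : s * Real.log (r / s) ≤ r - s := by
    have h := Real.log_le_sub_one_of_pos (show 0 < r / s by positivity)
    have h' : s * (r / s - 1) = r - s := by field_simp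
    nlinarith
  have h3 : 5 ≤ Real.log (Q / r) := by
    rw [Real.le_log_iff_exp_le (by positivity)]
    have h4 : Real.exp 5 = Real.exp 1 ^ 5 := by
      rw [← Real.exp_nat_mul]
      norm_num
    have h5 : Real.exp 1 ^ 5 ≤ (2.72 : ℝ) ^ 5 :=
      pow_le_pow_left₀ (Real.exp_pos _).le (by linarith [Real.exp_one_lt_d9]) 5
    have h6 : 200 ≤ Q / r := by rwa [le_div_iff₀ hr]
    rw [h4]
    refine h5.trans (le_trans ?_ h6)
    norm_num
  rw [h1]
  nlinarith

/-- Full colouring of a subset `A` of the ground set, extended by zero outside `A`. -/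
lemma full_coloring {n m : ℕ} (S : Fin m → Finset (Fin n)) (hnm : 2 * n ≤ m) (r : ℕ) :
    ∀ A : Finset (Fin n), A.card = r →
      ∃ χ : Fin n → ℤ, (∀ i ∈ A, χ i = 1 ∨ χ i = -1) ∧ (∀ i ∉ A, χ i = 0) ∧
        ∀ j, |∑ i ∈ S j, (χ i : ℝ)| ≤ 80 * √(r * Real.log (100 * m / r)) := by
  induction r using Nat.strong_induction_on with
  | _ r ih =>
  intro A hA
  rcases A.eq_empty_or_nonempty with rfl | hne
  · exact ⟨fun _ => 0, by simp, by simp, fun j => by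
      rw [show ∑ i ∈ S j, ((0 : ℤ) : ℝ) = 0 by simp, abs_zero]
      positivity⟩
  have hrpos : 0 < r := hA ▸ hne.card_pos
  have hrn : r ≤ n := by
    rw [← hA]
    simpa using A.card_le_univ
  have : Nonempty A := hne.to_subtype
  obtain ⟨y, hy, hycard, hydisc⟩ := partial_coloring_s2 (ι := A) (κ := Fin m)
    (fun j i => if (i : Fin n) ∈ S j then 1 else 0)
    (by intro j i; split_ifs <;> simp)
    (by simp only [Fintype.card_coe, Fintype.card_fin]; omega)
  simp only [Fintype.card_coe, Fintype.card_fin, hA] at hycard hydisc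
  set z : Fin n → ℤ := fun i => if h : i ∈ A then y ⟨i, h⟩ else 0 with hz
  have hzA : ∀ i : A, z i = y i := by
    intro i
    simp [hz]
  have hzout : ∀ i ∉ A, z i = 0 := by
    intro i hi
    simp [hz, hi]
  have hzdisc : ∀ j, |∑ i ∈ S j, (z i : ℝ)| ≤ 2 * √(r * Real.log (100 * m / r)) := by
    intro j
    convert hydisc j using 2
    simp_rw [← hzA]
    rw [Finset.sum_coe_sort A (fun i => (if i ∈ S j then (1 : ℝ) else 0) * (z i : ℝ))]
    simp_rw [ite_mul, one_mul, zero_mul]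
    rw [← Finset.sum_filter, Finset.filter_mem_eq_inter, Finset.inter_comm,
      ← Finset.filter_mem_eq_inter, Finset.sum_filter]
    apply Finset.sum_congr rfl
    intro i _
    split_ifs with h
    · rfl
    · simp [hzout i h]
  set A' := A.filter (fun i => z i = 0) with hA'
  have hcount : (A.filter (fun i => z i ≠ 0)).card
      = (Finset.univ.filter (fun i : A => y i ≠ 0)).card := by
    symm
    apply Finset.card_bij (fun (i : A) _ => (i : Fin n))
    · intro i hi
      simp only [Finset.mem_filter, Finset.mem_univ, true_and] at hi
      simp [hzA, hi]
    · intro i _ i' _ h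
      exact Subtype.ext h
    · intro i hi
      rw [Finset.mem_filter] at hi
      refine ⟨⟨i, hi.1⟩, ?_, rfl⟩
      simp only [Finset.mem_filter, Finset.mem_univ, true_and]
      rw [← hzA]
      exact hi.2
  have hsplit : A'.card + (A.filter (fun i => z i ≠ 0)).card = r := by
    rw [← hA, hA']
    exact Finset.card_filter_add_card_filter_not _
  have hs16 : 16 * A'.card ≤ 15 * r := by omega
  obtain ⟨χ, hχ1, hχ0, hχdisc⟩ := ih A'.card (by omega) A' rfl
  refine ⟨fun i => z i + χ i, ?_, ?_, ?_⟩
  · intro i hi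
    by_cases h : z i = 0
    · simpa [h] using hχ1 i (Finset.mem_filter.2 ⟨hi, h⟩)
    · have h' : χ i = 0 := hχ0 i (fun hh => h (Finset.mem_filter.1 hh).2)
      have h2 := hy ⟨i, hi⟩
      rw [← hzA] at h2
      simpa [h, h'] using h2
  · intro i hi
    have h' : χ i = 0 := hχ0 i (fun hh => hi (Finset.mem_filter.1 hh).1)
    simp [h', hzout i hi]
  · intro j
    push_cast
    rw [Finset.sum_add_distrib]
    set H := (r : ℝ) * Real.log (100 * m / r) with hH
    have hstep : √(A'.card * Real.log (100 * m / A'.card)) ≤ 39 / 40 * √H := by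
      rcases Nat.eq_zero_or_pos A'.card with h0 | hpos
      · rw [h0]
        simp
      · have hd := decay (Q := 100 * m) (r := r) (s := A'.card) (by exact_mod_cast hpos)
          (by exact_mod_cast hrpos) (by exact_mod_cast hs16)
          (by exact_mod_cast (by omega : 200 * r ≤ 100 * m))
        have hH0 : 0 ≤ H := by
          have : (0 : ℝ) ≤ A'.card * Real.log (100 * m / A'.card) := by
            apply mul_nonneg (Nat.cast_nonneg _)
            apply Real.log_nonneg
            rw [le_div_iff₀ (by exact_mod_cast hpos)]
            exact_mod_cast (by omega : 1 * A'.card ≤ 100 * m)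
          linarith
        rw [show (39 / 40 : ℝ) * √H = √((39 / 40) ^ 2 * H) by
          rw [Real.sqrt_mul (by norm_num) H, Real.sqrt_sq (by norm_num)]]
        apply Real.sqrt_le_sqrt
        nlinarith
    have h1 := abs_add_le (∑ i ∈ S j, (z i : ℝ)) (∑ i ∈ S j, (χ i : ℝ))
    linarith [hzdisc j, hχdisc j]


/-- **Lovett–Meka, existence form (Theorem 3)**: there is a universal constant `K > 0` such
that for any system of `m ≥ 2n` sets on a universe of `n` points, there exists a coloring
`χ : [n] → {-1,1}` with discrepancy at most `K·√(n·log₂(m/n))` on every set. -/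
theorem lovett_meka_main :
    ∃ K : ℝ, 0 < K ∧
      ∀ (n m : ℕ), 0 < n → 2 * n ≤ m →
        ∀ S : Fin m → Finset (Fin n),
          ∃ χ : Fin n → ℤ, (∀ i, χ i = 1 ∨ χ i = -1) ∧
            ∀ j : Fin m,
              |(∑ i ∈ S j, χ i : ℝ)| ≤ K * Real.sqrt (n * Real.logb 2 ((m : ℝ) / n)) := by
  refine ⟨240, by norm_num, ?_⟩
  intro n m hn hnm S
  obtain ⟨χ, h1, -, h3⟩ := full_coloring S hnm n Finset.univ (by simp)
  refine ⟨χ, fun i => h1 i (Finset.mem_univ i), fun j => (h3 j).trans ?_⟩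
  have hn' : (0 : ℝ) < n := by exact_mod_cast hn
  have hnm' : (2 : ℝ) * n ≤ m := by exact_mod_cast hnm
  have hm' : (0 : ℝ) < m := by linarith
  have hx : (2 : ℝ) ≤ m / n := by rwa [le_div_iff₀ hn']
  have hl2 : Real.log 2 ≤ Real.log ((m : ℝ) / n) := Real.log_le_log (by norm_num) hx
  have h100 : Real.log (100 * m / n) ≤ 7 * Real.log 2 + Real.log ((m : ℝ) / n) := by
    have h : (7 : ℝ) * Real.log 2 = Real.log (2 ^ 7) := by
      rw [Real.log_pow]
      norm_num
    rw [h, ← Real.log_mul (by norm_num) (by positivity), ← mul_div_assoc]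
    apply Real.log_le_log (by positivity)
    gcongr
    norm_num
  have hlog2 : Real.log 2 ≤ 1 := by linarith [Real.log_two_lt_d9]
  have hlog2' : 0 < Real.log 2 := Real.log_pos (by norm_num)
  have hlogb : Real.log ((m : ℝ) / n) ≤ Real.logb 2 ((m : ℝ) / n) := by
    rw [Real.logb, le_div_iff₀ hlog2']
    nlinarith
  have hmain : (n : ℝ) * Real.log (100 * m / n) ≤ 3 ^ 2 * (n * Real.logb 2 ((m : ℝ) / n)) := by
    nlinarith
  calc 80 * √((n : ℝ) * Real.log (100 * m / n))
      ≤ 80 * √(3 ^ 2 * (n * Real.logb 2 ((m : ℝ) / n))) := by gcongr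
    _ = 240 * √(n * Real.logb 2 ((m : ℝ) / n)) := by
        rw [Real.sqrt_mul (by norm_num), Real.sqrt_sq (by norm_num)]
        ring
end

section
/- There exists a universal constant K > 0 such that for all positive integers n ≥ 2, m, and t ≥ 1, and any system of sets S₁, ..., Sₘ ⊆ {1, ..., n} in which every point i ∈ {1, ..., n} belongs to at most t of the sets Sⱼ, there exists a coloring χ : {1, ..., n} → {-1, 1} such that for every j ∈ {1, ..., m}, |∑_{i ∈ Sⱼ} χ(i)| ≤ K·√t·log n. -/
/-!
The proof follows a derandomized Gram–Schmidt walk. Let `v i` be the `i`-th column of the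
incidence matrix divided by `√t`, so that `‖v i‖ ≤ 1`. A fractional coloring `x ∈ [-1, 1]ⁿ` starts
at `0`; coordinates with `|x i| = 1` are frozen, and one alive coordinate `p` is the pivot. Each
step moves along a direction `u`, supported on the alive coordinates and with `u p = 1`, for which
`b = ∑ u i • v i` is the component of `v p` orthogonal to `W`, the span of the other alive vectors,
until a new coordinate freezes (`exists_freeze`).

For a test vector `θ` with `‖θ‖ ≤ 1/8`, write `w` and `q` for the squared norms of the projections
of `θ` to `W` and to `V = W + ℝ v p`. The potential of `θ` is
`exp (⟪θ, ∑ x i • v i⟫ + 4 * (w + (q - w) * (1 - x p ^ 2)))`.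
Since `⟪θ, b⟫ ^ 2 ≤ q - w` (`inner_sq_le_projSq_sub`), a step of signed length `d` multiplies it by
at most `1 + d * c`, where `c` does not depend on `d` (`exp_step_le`). Hence one of the two signs of
`d` does not increase the sum of the potentials over any given finite family of test vectors, and
re-projecting after coordinates have frozen, or choosing a new pivot, only decreases them
(`walk`). When everything is frozen the sum of the `exp ⟪θ, ∑ y i • v i⟫` is at most
`exp (1/16)` times the number of test vectors.

The test vectors `± e j / 8`, one pair for each nonempty set `S j`, bound every discrepancy by
`8 √t (log (2 N) + 1/16)`, where `N` is the number of nonempty sets. Double counting gives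
`N ≤ n t`, which is at most `n ^ 3` when `t ≤ n ^ 2`; when `t > n ^ 2` every coloring has
discrepancy at most `n ≤ √t`.
-/

open scoped RealInnerProductSpace

section GramSchmidtWalk

variable {E : Type*} [NormedAddCommGroup E] [InnerProductSpace ℝ E] [FiniteDimensional ℝ E]

/-! ### Squared norms of projections -/

/-- The squared norm of the orthogonal projection of `θ` to `W`. -/
noncomputable def projSq (W : Submodule ℝ E) (θ : E) : ℝ := ‖W.starProjection θ‖ ^ 2

lemma projSq_nonneg (W : Submodule ℝ E) (θ : E) : 0 ≤ projSq W θ := sq_nonneg _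

lemma projSq_le (W : Submodule ℝ E) (θ : E) : projSq W θ ≤ ‖θ‖ ^ 2 := by
  unfold projSq
  gcongr
  exact W.norm_starProjection_apply_le θ

lemma projSq_sub_eq {W V : Submodule ℝ E} (h : W ≤ V) (θ : E) :
    ‖V.starProjection θ - W.starProjection θ‖ ^ 2 = projSq V θ - projSq W θ := by
  have h1 : ⟪V.starProjection θ - W.starProjection θ, W.starProjection θ⟫ = 0 := by
    have e : V.starProjection θ - W.starProjection θ
        = (θ - W.starProjection θ) - (θ - V.starProjection θ) := by abel
    rw [e, inner_sub_left, W.starProjection_inner_eq_zero _ _ (W.starProjection_apply_mem θ),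
      V.starProjection_inner_eq_zero _ _ (h (W.starProjection_apply_mem θ)), sub_zero]
  have h2 : ‖V.starProjection θ - W.starProjection θ + W.starProjection θ‖ ^ 2
      = ‖V.starProjection θ - W.starProjection θ‖ ^ 2 + ‖W.starProjection θ‖ ^ 2 := by
    rw [norm_add_sq_real, h1]; ring
  rw [sub_add_cancel] at h2
  unfold projSq
  linarith

lemma projSq_mono {W V : Submodule ℝ E} (h : W ≤ V) (θ : E) : projSq W θ ≤ projSq V θ := by
  have := projSq_sub_eq h θ
  nlinarith [sq_nonneg ‖V.starProjection θ - W.starProjection θ‖]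

/-- Only the part of `θ` in `V ⊖ W` pairs with a vector `b` of `V ⊖ W`. -/
lemma inner_sq_le_projSq_sub {W V : Submodule ℝ E} (h : W ≤ V) (θ b : E) (hbV : b ∈ V)
    (hbW : ∀ w ∈ W, ⟪b, w⟫ = 0) (hb : ‖b‖ ≤ 1) :
    ⟪θ, b⟫ ^ 2 ≤ projSq V θ - projSq W θ := by
  have h1 : ⟪θ, b⟫ = ⟪V.starProjection θ - W.starProjection θ, b⟫ := by
    have e1 := V.starProjection_inner_eq_zero θ b hbV
    have e2 := hbW _ (W.starProjection_apply_mem θ)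
    rw [real_inner_comm] at e2
    rw [inner_sub_left] at e1 ⊢
    linarith
  rw [← projSq_sub_eq h θ, h1, ← sq_abs]
  have h2 := abs_real_inner_le_norm (V.starProjection θ - W.starProjection θ) b
  gcongr
  calc _ ≤ _ := h2
    _ ≤ ‖V.starProjection θ - W.starProjection θ‖ * 1 := by gcongr
    _ = _ := mul_one _

/-! ### One-dimensional exponential estimate -/

/-- The exponent is `d * (g - 8 * h * a) - 4 * h * d ^ 2`; for small `h` the quadratic correction
absorbs the second-order term of the exponential, leaving a bound that is affine in `d`. -/
lemma exp_step_le (g h a d : ℝ) (hg : g ^ 2 ≤ h) (hh : h ≤ 1 / 64) (ha : |a| ≤ 1)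
    (had : |a + d| ≤ 1) :
    Real.exp (d * g - 4 * h * ((a + d) ^ 2 - a ^ 2)) ≤ 1 + d * (g - 8 * h * a) := by
  set r : ℝ := g - 4 * h * (2 * a + d) with hr
  have hz : d * g - 4 * h * ((a + d) ^ 2 - a ^ 2) = d * r := by rw [hr]; ring
  have h0 : 0 ≤ h := (sq_nonneg g).trans hg
  have hd : |d| ≤ 2 := by rw [abs_le] at *; constructor <;> linarith
  have hs : |2 * a + d| ≤ 2 := by rw [abs_le] at *; constructor <;> linarith
  have hg8 : |g| ≤ 1 / 8 := abs_le_of_sq_le_sq (by linarith) (by norm_num)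
  have hhs : |h * (2 * a + d)| ≤ h * 2 := by
    rw [abs_mul, abs_of_nonneg h0]; gcongr
  have hr2 : r ^ 2 ≤ 4 * h := by
    -- `r = g - 4 h s` with `|s| ≤ 2`, so `r ^ 2 ≤ 2 g ^ 2 + 32 (h s) ^ 2` and `h ^ 2 ≤ h / 64`
    have h1 : (h * (2 * a + d)) ^ 2 ≤ (h * 2) ^ 2 := sq_le_sq' (abs_le.1 hhs).1 (abs_le.1 hhs).2
    nlinarith [sq_nonneg (g + 4 * (h * (2 * a + d)))]
  have hr1 : |r| ≤ 1 / 4 := abs_le_of_sq_le_sq (by linarith) (by norm_num)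
  have hz1 : |d * r| ≤ 1 := by
    rw [abs_mul]
    nlinarith [abs_nonneg d, abs_nonneg r]
  have hexp := (abs_le.1 (Real.abs_exp_sub_one_sub_id_le hz1)).2
  rw [hz]
  have h3 : (d * r) ^ 2 ≤ d ^ 2 * (4 * h) := by
    rw [mul_pow]; gcongr
  have h4 : 1 + d * (g - 8 * h * a) = 1 + d * r + d ^ 2 * (4 * h) := by rw [hr]; ring
  linarith

variable {ι : Type*} [Fintype ι]

/-! ### Directions and step lengths -/

/-- The coordinates of a fractional coloring that are not yet frozen. -/
noncomputable def alive (x : ι → ℝ) : Finset ι := Finset.univ.filter fun i => |x i| < 1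

lemma mem_alive {x : ι → ℝ} {i : ι} : i ∈ alive x ↔ |x i| < 1 := by simp [alive]

/-- Moving along a direction supported on the alive coordinates, one stays in the cube until some
alive coordinate freezes. -/
lemma exists_freeze (x u : ι → ℝ) (p : ι) (hx : ∀ i, |x i| ≤ 1) (hp : |x p| < 1)
    (hup : |u p| = 1) (hu : ∀ i, i ∉ alive x → u i = 0) :
    ∃ δ : ℝ, 0 ≤ δ ∧ (∀ i, |x i + δ * u i| ≤ 1) ∧ ∃ i ∈ alive x, |x i + δ * u i| = 1 := by
  have hne : (alive x).Nonempty := ⟨p, mem_alive.2 hp⟩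
  let f : ℝ → ℝ := fun δ => (alive x).sup' hne fun i => |x i + δ * u i|
  have hf : Continuous f := Continuous.finset_sup'_apply hne fun i _ => by fun_prop
  have h0 : f 0 ≤ 1 := Finset.sup'_le _ _ fun i _ => by simpa using hx i
  have h2 : 1 ≤ f 2 := by
    have h1 : |x p + 2 * u p| ≤ f 2 :=
      Finset.le_sup' (fun i => |x i + 2 * u i|) (mem_alive.2 hp)
    have h3 := abs_sub_abs_le_abs_sub (2 * u p) (-(x p))
    rw [abs_mul, hup, abs_neg, sub_neg_eq_add, add_comm (2 * u p)] at h3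
    norm_num at h3
    linarith
  obtain ⟨δ, hδ, hfδ⟩ := intermediate_value_Icc (by norm_num : (0 : ℝ) ≤ 2) hf.continuousOn ⟨h0, h2⟩
  obtain ⟨i, hi, hie⟩ := Finset.exists_mem_eq_sup' hne fun i => |x i + δ * u i|
  refine ⟨δ, hδ.1, fun j => ?_, i, hi, hie.symm.trans hfδ⟩
  by_cases hj : j ∈ alive x
  · exact (Finset.le_sup' (fun i => |x i + δ * u i|) hj).trans hfδ.le
  · rw [hu j hj]; simpa using hx j

/-- The span of the vectors indexed by `A`. -/
def spanOn (v : ι → E) (A : Finset ι) : Submodule ℝ E := Submodule.span ℝ (v '' A)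

lemma spanOn_mono (v : ι → E) {A B : Finset ι} (h : A ⊆ B) : spanOn v A ≤ spanOn v B :=
  Submodule.span_mono (Set.image_mono (by exact_mod_cast h))

variable [DecidableEq ι]

/-- The step direction `u`: a combination of the vectors indexed by `A` with `u p = 1` giving the
component of `v p` orthogonal to the other vectors of `A`. -/
lemma exists_direction_s3 (v : ι → E) (A : Finset ι) (p : ι) (hp : p ∈ A) :
    ∃ u : ι → ℝ, u p = 1 ∧ (∀ i, i ∉ A → u i = 0) ∧
      ‖∑ i, u i • v i‖ ≤ ‖v p‖ ∧ ∑ i, u i • v i ∈ spanOn v A ∧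
      ∀ w ∈ spanOn v (A.erase p), ⟪∑ i, u i • v i, w⟫ = 0 := by
  set W := spanOn v (A.erase p) with hW
  have hmem : W.starProjection (v p) ∈ W := W.starProjection_apply_mem _
  obtain ⟨c, hc⟩ := (Submodule.mem_span_image_finset_iff_exists_fun' ℝ).1 hmem
  have hsum : ∑ i, (if i = p then 1 else if i ∈ A then - c i else 0) • v i
      = v p - W.starProjection (v p) := by
    rw [← hc, ← Finset.add_sum_erase _ _ (Finset.mem_univ p), if_pos rfl, one_smul, sub_eq_add_neg,
      ← Finset.sum_neg_distrib]
    congr 1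
    rw [← Finset.sum_subset (Finset.erase_subset_erase p (Finset.subset_univ A))]
    · refine Finset.sum_congr rfl fun i hi => ?_
      rw [if_neg (Finset.ne_of_mem_erase hi), if_pos (Finset.mem_of_mem_erase hi), neg_smul]
    · intro i hi hi'
      have hip := Finset.ne_of_mem_erase hi
      rw [if_neg hip, if_neg (fun h => hi' (Finset.mem_erase.2 ⟨hip, h⟩)), zero_smul]
  refine ⟨fun i => if i = p then 1 else if i ∈ A then - c i else 0, by simp, ?_, ?_, ?_, ?_⟩
  · intro i hi
    have : i ≠ p := by rintro rfl; exact hi hp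
    simp [this, hi]
  · rw [hsum]
    rw [← W.starProjection_orthogonal_val]
    exact Wᗮ.norm_starProjection_apply_le (v p)
  · rw [hsum]
    exact Submodule.sub_mem _ (Submodule.subset_span ⟨p, by exact_mod_cast hp, rfl⟩)
      (spanOn_mono v (Finset.erase_subset p A) hmem)
  · intro w hw
    rw [hsum]
    exact W.starProjection_inner_eq_zero _ _ hw

/-! ### The potential and the walk -/

/-- The exponent of the potential of `θ` when `A` is the alive set and `p` the pivot. -/
noncomputable def energy (v : ι → E) (θ : E) (x : ι → ℝ) (A : Finset ι) (p : ι) : ℝ :=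
  ⟪θ, ∑ i, x i • v i⟫ + 4 * (projSq (spanOn v (A.erase p)) θ +
    (projSq (spanOn v A) θ - projSq (spanOn v (A.erase p)) θ) * (1 - x p ^ 2))

/-- Shrinking the alive set while keeping the pivot does not increase the energy. -/
lemma energy_anti (v : ι → E) (θ : E) (x : ι → ℝ) {A B : Finset ι} (h : B ⊆ A) (p : ι)
    (hx : |x p| ≤ 1) : energy v θ x B p ≤ energy v θ x A p := by
  unfold energy
  have h1 := projSq_mono (spanOn_mono v h) θ
  have h2 := projSq_mono (spanOn_mono v (Finset.erase_subset_erase p h)) θ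
  have h3 : x p ^ 2 ≤ 1 := (sq_le_one_iff_abs_le_one _).2 hx
  have h4 := sq_nonneg (x p)
  nlinarith

/-- Once the pivot is frozen, replacing it by any alive coordinate does not increase the energy. -/
lemma energy_new_pivot (v : ι → E) (θ : E) (x : ι → ℝ) {A B : Finset ι} (p p' : ι)
    (h : B ⊆ A.erase p) (hx : |x p| = 1) : energy v θ x B p' ≤ energy v θ x A p := by
  unfold energy
  have h1 := projSq_mono (spanOn_mono v h) θ
  have h2 := projSq_mono (spanOn_mono v (Finset.erase_subset p' B)) θ
  have h3 : x p ^ 2 = 1 := by rw [← sq_abs, hx, one_pow]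
  rw [h3]
  nlinarith [sq_nonneg (x p')]

variable {κ : Type*} [Fintype κ]

/-- One step of the walk, with the alive set in the energy not yet updated. -/
lemma walk_step (v : ι → E) (hv : ∀ i, ‖v i‖ ≤ 1) (θ : κ → E) (hθ : ∀ k, ‖θ k‖ ≤ 1 / 8)
    (x : ι → ℝ) (p : ι) (hx : ∀ i, |x i| ≤ 1) (hp : |x p| < 1) :
    ∃ x' : ι → ℝ, (∀ i, |x' i| ≤ 1) ∧ alive x' ⊂ alive x ∧
      ∑ k, Real.exp (energy v (θ k) x' (alive x) p)
        ≤ ∑ k, Real.exp (energy v (θ k) x (alive x) p) := by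
  obtain ⟨u, hup, hu0, hub, huV, huW⟩ := exists_direction_s3 v (alive x) p (mem_alive.2 hp)
  set b := ∑ i, u i • v i with hb
  set W := spanOn v ((alive x).erase p) with hW
  set V := spanOn v (alive x) with hV
  have hWV : W ≤ V := spanOn_mono v (Finset.erase_subset p _)
  let h : κ → ℝ := fun k => projSq V (θ k) - projSq W (θ k)
  let L : ℝ := ∑ k, Real.exp (energy v (θ k) x (alive x) p) * (⟪θ k, b⟫ - 8 * h k * x p)
  -- the sign of the step is chosen so that the first-order change is not positive
  obtain ⟨σ, hσ, hσL⟩ : ∃ σ : ℝ, |σ| = 1 ∧ σ * L ≤ 0 := by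
    rcases le_total L 0 with hL | hL
    · exact ⟨1, by simp, by linarith⟩
    · exact ⟨-1, by simp, by linarith⟩
  obtain ⟨δ, hδ, hcube, i₀, hi₀, hi₀'⟩ := exists_freeze x (fun i => σ * u i) p hx hp
    (by simp [hup, hσ]) (fun i hi => by simp [hu0 i hi])
  refine ⟨fun i => x i + δ * (σ * u i), hcube, ?_, ?_⟩
  · rw [Finset.ssubset_iff_of_subset]
    · exact ⟨i₀, hi₀, fun hmem => (mem_alive.1 hmem).ne hi₀'⟩
    · intro i hi
      by_contra hni
      have := mem_alive.1 hi
      simp only [hu0 i hni, mul_zero, add_zero] at this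
      exact hni (mem_alive.2 this)
  · have hterm : ∀ k, Real.exp (energy v (θ k) (fun i => x i + δ * (σ * u i)) (alive x) p)
        ≤ Real.exp (energy v (θ k) x (alive x) p) * (1 + δ * σ * (⟪θ k, b⟫ - 8 * h k * x p)) := by
      intro k
      have hsum : ∑ i, (x i + δ * (σ * u i)) • v i = ∑ i, x i • v i + (δ * σ) • b := by
        rw [hb, Finset.smul_sum, ← Finset.sum_add_distrib]
        refine Finset.sum_congr rfl fun i _ => ?_
        rw [add_smul, smul_smul, mul_assoc]
      have hen : energy v (θ k) (fun i => x i + δ * (σ * u i)) (alive x) p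
          = energy v (θ k) x (alive x) p
            + (δ * σ * ⟪θ k, b⟫ - 4 * h k * ((x p + δ * σ) ^ 2 - x p ^ 2)) := by
        simp only [energy, hsum, inner_add_right, inner_smul_right, hup, h]
        ring
      rw [hen, Real.exp_add]
      gcongr
      refine exp_step_le _ _ _ _ ?_ ?_ (hx p) ?_
      · exact inner_sq_le_projSq_sub hWV _ _ huV huW (hub.trans (hv p))
      · have h1 := projSq_le V (θ k)
        have h2 := projSq_nonneg W (θ k)
        have h3 : ‖θ k‖ ^ 2 ≤ (1 / 8) ^ 2 := by gcongr; exact hθ k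
        simp only [h]
        linarith
      · have := hcube p
        simpa [hup] using this
    calc _ ≤ ∑ k, Real.exp (energy v (θ k) x (alive x) p)
          * (1 + δ * σ * (⟪θ k, b⟫ - 8 * h k * x p)) := Finset.sum_le_sum fun k _ => hterm k
      _ = ∑ k, Real.exp (energy v (θ k) x (alive x) p) + δ * (σ * L) := by
        simp only [L, Finset.mul_sum]
        rw [← Finset.sum_add_distrib]
        exact Finset.sum_congr rfl fun k _ => by ring
      _ ≤ _ := by nlinarith [mul_nonneg hδ (neg_nonneg.2 hσL)]

/-- Iterating the steps: some full coloring has total potential at most that of `x`. -/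
lemma walk (v : ι → E) (hv : ∀ i, ‖v i‖ ≤ 1) (θ : κ → E) (hθ : ∀ k, ‖θ k‖ ≤ 1 / 8)
    (A : Finset ι) : ∀ (x : ι → ℝ) (p : ι), alive x = A → (∀ i, |x i| ≤ 1) → |x p| < 1 →
    ∃ y : ι → ℝ, (∀ i, |y i| = 1) ∧
      ∑ k, Real.exp ⟪θ k, ∑ i, y i • v i⟫ ≤ ∑ k, Real.exp (energy v (θ k) x A p) := by
  induction A using Finset.strongInduction with
  | H A ih =>
    rintro x p rfl hx hp
    obtain ⟨x', hx', hss, hle⟩ := walk_step v hv θ hθ x p hx hp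
    by_cases hp' : |x' p| < 1
    · obtain ⟨y, hy, hyle⟩ := ih _ hss x' p rfl hx' hp'
      refine ⟨y, hy, hyle.trans (le_trans ?_ hle)⟩
      gcongr
      exact energy_anti v _ x' hss.1 p (hx' p)
    have hp1 : |x' p| = 1 := le_antisymm (hx' p) (not_lt.1 hp')
    by_cases hq : ∃ q, |x' q| < 1
    · obtain ⟨q, hq⟩ := hq
      obtain ⟨y, hy, hyle⟩ := ih _ hss x' q rfl hx' hq
      refine ⟨y, hy, hyle.trans (le_trans ?_ hle)⟩
      gcongr
      refine energy_new_pivot v _ x' p q (fun i hi => ?_) hp1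
      refine Finset.mem_erase.2 ⟨?_, hss.1 hi⟩
      rintro rfl
      exact hp' (mem_alive.1 hi)
    · push Not at hq
      refine ⟨x', fun i => le_antisymm (hx' i) (hq i), le_trans ?_ hle⟩
      gcongr with k
      have h3 : x' p ^ 2 = 1 := by rw [← sq_abs, hp1, one_pow]
      have := projSq_nonneg (spanOn v ((alive x).erase p)) (θ k)
      simp only [energy, h3]
      linarith

/-- The walk started at `0`. -/
lemma exists_signing (v : ι → E) (hv : ∀ i, ‖v i‖ ≤ 1) (θ : κ → E) (hθ : ∀ k, ‖θ k‖ ≤ 1 / 8) :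
    ∃ y : ι → ℝ, (∀ i, |y i| = 1) ∧
      ∑ k, Real.exp ⟪θ k, ∑ i, y i • v i⟫ ≤ Fintype.card κ * Real.exp (1 / 16) := by
  have hbound : ∀ (x : ι → ℝ) (p : ι) (k : κ), x = 0 →
      energy v (θ k) x Finset.univ p ≤ 1 / 16 := by
    rintro x p k rfl
    have h1 := projSq_le (spanOn v Finset.univ) (θ k)
    have h3 : ‖θ k‖ ^ 2 ≤ (1 / 8) ^ 2 := by gcongr; exact hθ k
    simp only [energy, Pi.zero_apply, zero_smul, Finset.sum_const_zero, inner_zero_right]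
    linarith
  cases isEmpty_or_nonempty ι with
  | inl hι =>
    refine ⟨0, fun i => isEmptyElim i, ?_⟩
    have : (1 : ℝ) ≤ Real.exp (1 / 16) := Real.one_le_exp (by norm_num)
    simpa using le_mul_of_one_le_right (Nat.cast_nonneg (Fintype.card κ)) this
  | inr hι =>
    obtain ⟨p⟩ := hι
    obtain ⟨y, hy, hle⟩ := walk v hv θ hθ Finset.univ 0 p
      (by ext i; simp [mem_alive]) (by simp) (by simp)
    refine ⟨y, hy, hle.trans ?_⟩
    calc _ ≤ ∑ _k : κ, Real.exp (1 / 16) := by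
          gcongr with k
          exact hbound 0 p k rfl
      _ = _ := by simp

end GramSchmidtWalk

/-! ### Application to set systems -/

/-- The number of nonempty sets is at most the number of incidences. -/
lemma card_nonempty_le {n m t : ℕ} (S : Fin m → Finset (Fin n))
    (hS : ∀ i : Fin n, (Finset.univ.filter (fun j => i ∈ S j)).card ≤ t) :
    (Finset.univ.filter fun j => (S j).Nonempty).card ≤ n * t := by
  calc (Finset.univ.filter fun j => (S j).Nonempty).card
      = ∑ j ∈ Finset.univ.filter (fun j => (S j).Nonempty), 1 := by simp
    _ ≤ ∑ j ∈ Finset.univ.filter (fun j => (S j).Nonempty), (S j).card :=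
        Finset.sum_le_sum fun j hj => Finset.card_pos.2 (Finset.mem_filter.1 hj).2
    _ ≤ ∑ j, (S j).card := Finset.sum_le_sum_of_subset (Finset.filter_subset _ _)
    _ = ∑ j, ∑ i, if i ∈ S j then 1 else 0 := by simp
    _ = ∑ i, ∑ j, if i ∈ S j then 1 else 0 := Finset.sum_comm
    _ = ∑ i, (Finset.univ.filter (fun j => i ∈ S j)).card := by simp
    _ ≤ ∑ _i : Fin n, t := Finset.sum_le_sum fun i _ => hS i
    _ = n * t := by simp

/-- A discrepancy bound in terms of the number of nonempty sets. -/
lemma exists_coloring {n m t : ℕ} (ht : 1 ≤ t) (S : Fin m → Finset (Fin n))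
    (hS : ∀ i : Fin n, (Finset.univ.filter (fun j => i ∈ S j)).card ≤ t) :
    ∃ y : Fin n → ℝ, (∀ i, |y i| = 1) ∧ ∀ j, (S j).Nonempty →
      |∑ i ∈ S j, y i| ≤ 8 * Real.sqrt t *
        (Real.log (2 * (Finset.univ.filter fun j => (S j).Nonempty).card) + 1 / 16) := by
  have ht0 : (0 : ℝ) < t := by exact_mod_cast ht
  have hst : 0 < Real.sqrt t := Real.sqrt_pos.2 ht0
  let v : Fin n → EuclideanSpace ℝ (Fin m) := fun i =>
    WithLp.toLp 2 fun j => if i ∈ S j then (Real.sqrt t)⁻¹ else 0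
  have hv : ∀ i, ‖v i‖ ≤ 1 := by
    intro i
    rw [← sq_le_one_iff₀ (norm_nonneg _), EuclideanSpace.real_norm_sq_eq]
    have : ∀ j, (v i) j ^ 2 = if i ∈ S j then (t : ℝ)⁻¹ else 0 := by
      intro j
      simp only [v]
      split_ifs
      · rw [inv_pow, Real.sq_sqrt ht0.le]
      · simp
    simp only [this]
    rw [← Finset.sum_filter, Finset.sum_const, nsmul_eq_mul, ← div_eq_mul_inv, div_le_one ht0]
    exact_mod_cast hS i
  let J := {j : Fin m // (S j).Nonempty}
  let s : Bool → ℝ := fun c => if c then 1 / 8 else -(1 / 8)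
  let θ : J × Bool → EuclideanSpace ℝ (Fin m) := fun k => EuclideanSpace.single k.1.1 (s k.2)
  have hθ : ∀ k, ‖θ k‖ ≤ 1 / 8 := by
    rintro ⟨j, c⟩
    simp only [θ, PiLp.norm_single, s, Real.norm_eq_abs]
    cases c <;> norm_num
  obtain ⟨y, hy, hle⟩ := exists_signing v hv θ hθ
  refine ⟨y, hy, fun j hj => ?_⟩
  set N := (Finset.univ.filter fun j => (S j).Nonempty).card with hN
  have hcard : (Fintype.card (J × Bool) : ℝ) = 2 * N := by
    rw [Fintype.card_prod, Fintype.card_bool, Fintype.card_subtype]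
    push_cast
    ring
  have hNpos : (0 : ℝ) < N := by
    have : 0 < N := Finset.card_pos.2 ⟨j, by simpa using hj⟩
    exact_mod_cast this
  have hinner : ∀ c, ⟪θ (⟨j, hj⟩, c), ∑ i, y i • v i⟫
      = s c * ((Real.sqrt t)⁻¹ * ∑ i ∈ S j, y i) := by
    intro c
    have : (∑ i, y i • v i) j = (Real.sqrt t)⁻¹ * ∑ i ∈ S j, y i := by
      simp [v, Finset.sum_ite_mem, ← Finset.sum_mul, mul_comm]
    simp only [θ]
    rw [EuclideanSpace.inner_single_left, this]
    simp
  have hkey : ∀ c, s c * ((Real.sqrt t)⁻¹ * ∑ i ∈ S j, y i) ≤ Real.log (2 * N) + 1 / 16 := by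
    intro c
    rw [← hinner c, ← Real.exp_le_exp, Real.exp_add, Real.exp_log (by positivity), ← hcard]
    refine le_trans ?_ hle
    exact Finset.single_le_sum (f := fun k => Real.exp ⟪θ k, ∑ i, y i • v i⟫)
      (fun k _ => (Real.exp_pos _).le) (Finset.mem_univ _)
  have h1 := hkey true
  have h2 := hkey false
  simp only [s] at h1 h2
  have h3 : |(Real.sqrt t)⁻¹ * ∑ i ∈ S j, y i| ≤ 8 * (Real.log (2 * N) + 1 / 16) := by
    rw [abs_le]
    constructor
    · norm_num at h2 ⊢; linarith
    · norm_num at h1 ⊢; linarith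
  rw [abs_mul, abs_of_pos (inv_pos.2 hst), inv_mul_le_iff₀ hst] at h3
  linarith

/-- **Lovett–Meka, Beck–Fiala setting, existence form (Theorem 4)**: there is a universal
constant `K > 0` such that for any system of `m` sets on a universe of `n ≥ 2` points in which
every point belongs to at most `t` sets (`t ≥ 1`), there exists a coloring `χ : [n] → {-1,1}`
with discrepancy at most `K·√t·log n` on every set. -/
theorem lovett_meka_beck_fiala :
    ∃ K : ℝ, 0 < K ∧
      ∀ (n m t : ℕ), 2 ≤ n → 0 < m → 1 ≤ t →
        ∀ S : Fin m → Finset (Fin n),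
          (∀ i : Fin n, (Finset.univ.filter (fun j => i ∈ S j)).card ≤ t) →
          ∃ χ : Fin n → ℤ, (∀ i, χ i = 1 ∨ χ i = -1) ∧
            ∀ j : Fin m,
              |(∑ i ∈ S j, χ i : ℝ)| ≤ K * Real.sqrt t * Real.log n := by
  refine ⟨40, by norm_num, fun n m t hn _ ht S hS => ?_⟩
  have hn2 : (2 : ℝ) ≤ n := by exact_mod_cast hn
  have hlog2 : Real.log 2 ≤ Real.log n := Real.log_le_log (by norm_num) hn2
  have hl := Real.log_two_gt_d9
  have hst := Real.sqrt_nonneg (t : ℝ)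
  by_cases htn : n ^ 2 ≤ t
  · refine ⟨fun _ => 1, by simp, fun j => ?_⟩
    have hnt : (n : ℝ) ≤ Real.sqrt t := Real.le_sqrt_of_sq_le (by exact_mod_cast htn)
    have hSn : ((S j).card : ℝ) ≤ n := by
      exact_mod_cast (Finset.card_le_univ (S j)).trans (by simp)
    simp only [Int.cast_one, Finset.sum_const, nsmul_eq_mul, mul_one, Nat.abs_cast]
    nlinarith
  · obtain ⟨y, hy, hyS⟩ := exists_coloring ht S hS
    refine ⟨fun i => if y i = 1 then 1 else -1, fun i => by dsimp only; split_ifs <;> simp,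
      fun j => ?_⟩
    have hχ : ∀ i, (((if y i = 1 then 1 else -1 : ℤ)) : ℝ) = y i := by
      intro i
      rcases eq_or_eq_neg_of_abs_eq (hy i) with h | h <;> simp [h]
      norm_num
    simp only [hχ]
    rcases (S j).eq_empty_or_nonempty with hj | hj
    · rw [hj]
      simp only [Finset.sum_empty, abs_zero]
      have : 0 ≤ Real.log n := by linarith
      positivity
    refine (hyS j hj).trans ?_
    set N := (Finset.univ.filter fun j => (S j).Nonempty).card with hN
    have hNpos : 0 < N := Finset.card_pos.2 ⟨j, by simpa using hj⟩
    have hNn : 2 * N ≤ n ^ 4 := by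
      have h1 : N ≤ n * t := card_nonempty_le S hS
      have h2 : n * t ≤ n * n ^ 2 := Nat.mul_le_mul_left n (by omega)
      calc 2 * N ≤ n * (n * n ^ 2) := Nat.mul_le_mul hn (h1.trans h2)
        _ = n ^ 4 := by ring
    have hlog : Real.log (2 * N) ≤ 4 * Real.log n := by
      have h3 : Real.log (2 * N) ≤ Real.log ((n : ℝ) ^ 4) :=
        Real.log_le_log (by positivity) (by exact_mod_cast hNn)
      rw [Real.log_pow] at h3
      exact_mod_cast h3
    have h5 : Real.log (2 * N) + 1 / 16 ≤ 5 * Real.log n := by linarith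
    calc 8 * Real.sqrt t * (Real.log (2 * N) + 1 / 16)
        ≤ 8 * Real.sqrt t * (5 * Real.log n) := by gcongr
      _ = 40 * Real.sqrt t * Real.log n := by ring
end

section
/- Let n and m be positive integers, let v₁, ..., vₘ ∈ ℝⁿ be vectors, let x₀ ∈ [-1, 1]ⁿ be a starting point, and let c₁, ..., cₘ ≥ 0 be thresholds satisfying ∑_{j=1}^m exp(-cⱼ²/16) ≤ n/16. Then for every δ > 0 there exists a point x ∈ [-1, 1]ⁿ such that: (1) |⟨x - x₀, vⱼ⟩| ≤ cⱼ·‖vⱼ‖₂ for every j ∈ {1, ..., m}, and (2) |xᵢ| ≥ 1 - δ for at least n/2 indices i ∈ {1, ..., n}. -/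
/-!
The proof is a derandomised form of a sticky random walk that starts at `x₀`. Normalise the vectors
to norm at most `1`. From a point `x` at time `t`, move by `r • ∑ₖ ±bₖ`, where `b` is an
orthonormal basis of the orthogonal complement `V` of all coordinate vectors that are frozen
(`|xᵢ|` within `η` of `1`) and all constraint vectors that are tight (`|⟨x - x₀, vⱼ⟩|` within `η` of
`cⱼ`), and advance the time by `r²`. If `r√n ≤ η`, no bound is ever violated.

Averaging over the signs, `‖x‖²` grows by exactly `r² dim V` (`sum_norm_sq_step`), while the
exponential potential `pot`, a sum of terms `exp(-λⱼ²t/2) cosh(λⱼ⟨x - x₀, vⱼ⟩)` with `λⱼ = cⱼ/8` and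
weights `exp(-cⱼ²/16)`, does not grow (`sum_pot_step`). Every tight constraint contributes at
least `1/4` to `pot` up to time `8` (`card_tight_le`). Hence, as long as fewer than `n/2` coordinates
are frozen, `dim V ≥ n/2 - 4 pot`, and some choice of signs does not decrease
`‖x‖² - t n/2 - (8 - t) * 4 pot` (`exists_step`). This quantity is at least `-8 * 4 * n/16 = -2n` at
time `0`, so at time `8` it would give `‖x‖² ≥ 4n - 2n = 2n`, contradicting `‖x‖² ≤ n`. Therefore at
some time at least `n/2` coordinates are frozen.
-/

namespace PartialColoring

open Finset

/-! ### Rademacher sums -/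

/-- The real sign `±1` encoded by a Boolean. -/
def sgn (b : Bool) : ℝ := if b then 1 else -1

lemma sgn_not (b : Bool) : sgn (!b) = -sgn b := by cases b <;> simp [sgn]

lemma sgn_sq (b : Bool) : sgn b ^ 2 = 1 := by cases b <;> simp [sgn]

/-- A Rademacher sum has mean zero (the sign flip is an involution). -/
lemma sum_sgn_linear {d : ℕ} (h : Fin d → ℝ) :
    ∑ σ : Fin d → Bool, ∑ k, sgn (σ k) * h k = 0 := by
  have e := Equiv.sum_comp (Equiv.piCongrRight (fun _ : Fin d => Equiv.boolNot))
    (fun σ : Fin d → Bool => ∑ k, sgn (σ k) * h k)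
  have e2 : ∀ σ : Fin d → Bool,
      ∑ k, sgn ((Equiv.piCongrRight (fun _ : Fin d => Equiv.boolNot)) σ k) * h k
        = -∑ k, sgn (σ k) * h k := by
    intro σ
    rw [← Finset.sum_neg_distrib]
    refine Finset.sum_congr rfl fun k _ => ?_
    simp [sgn_not]
  simp only [e2, Finset.sum_neg_distrib] at e
  linarith

/-- Rademacher sums are sub-Gaussian. -/
lemma sum_sgn_exp {d : ℕ} (h : Fin d → ℝ) :
    ∑ σ : Fin d → Bool, Real.exp (∑ k, sgn (σ k) * h k)
      ≤ 2 ^ d * Real.exp ((∑ k, h k ^ 2) / 2) := by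
  have e1 : ∑ σ : Fin d → Bool, Real.exp (∑ k, sgn (σ k) * h k)
      = ∏ k, ∑ b : Bool, Real.exp (sgn b * h k) := by
    rw [Finset.prod_univ_sum, Fintype.piFinset_univ]
    simp only [Real.exp_sum]
  have e2 : ∀ k, ∑ b : Bool, Real.exp (sgn b * h k) = 2 * Real.cosh (h k) := by
    intro k
    simp [sgn, Real.cosh_eq]
    ring
  rw [e1]
  simp only [e2]
  calc ∏ k, 2 * Real.cosh (h k) ≤ ∏ k, 2 * Real.exp (h k ^ 2 / 2) :=
        Finset.prod_le_prod (fun k _ => by have := Real.cosh_pos (h k); positivity)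
          (fun k _ => by have := Real.cosh_le_exp_half_sq (h k); linarith)
    _ = _ := by
        rw [Finset.prod_mul_distrib, ← Real.exp_sum, Finset.sum_div]
        simp

lemma sum_sgn_cosh {d : ℕ} (a : ℝ) (h : Fin d → ℝ) :
    ∑ σ : Fin d → Bool, Real.cosh (a + ∑ k, sgn (σ k) * h k)
      ≤ 2 ^ d * (Real.cosh a * Real.exp ((∑ k, h k ^ 2) / 2)) := by
  have e1 := sum_sgn_exp h
  have e2 := sum_sgn_exp (fun k => -h k)
  have e3 : ∀ σ : Fin d → Bool, Real.cosh (a + ∑ k, sgn (σ k) * h k)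
      = Real.exp a / 2 * Real.exp (∑ k, sgn (σ k) * h k)
        + Real.exp (-a) / 2 * Real.exp (∑ k, sgn (σ k) * -h k) := by
    intro σ
    simp only [mul_neg, Finset.sum_neg_distrib]
    rw [Real.cosh_eq, neg_add, Real.exp_add, Real.exp_add]
    ring
  simp only [neg_sq] at e2
  simp only [e3, Finset.sum_add_distrib, ← Finset.mul_sum]
  have p1 := Real.exp_pos a
  have p2 := Real.exp_pos (-a)
  rw [Real.cosh_eq]
  nlinarith [mul_le_mul_of_nonneg_left e1 p1.le, mul_le_mul_of_nonneg_left e2 p2.le]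

/-! ### One random step and the potential -/

variable {n m d : ℕ}

/-- The displacement `r ∑ₖ ±bₖ` of one step of the walk. -/
noncomputable def step (r : ℝ) (b : Fin d → EuclideanSpace ℝ (Fin n)) (σ : Fin d → Bool) :
    EuclideanSpace ℝ (Fin n) :=
  r • ∑ k, sgn (σ k) • b k

lemma inner_step (r : ℝ) (b : Fin d → EuclideanSpace ℝ (Fin n)) (σ : Fin d → Bool)
    (p : EuclideanSpace ℝ (Fin n)) :
    inner ℝ (step r b σ) p = ∑ k, sgn (σ k) * (r * inner ℝ (b k) p) := by
  simp only [step, real_inner_smul_left, sum_inner, Finset.mul_sum]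
  exact Finset.sum_congr rfl fun k _ => by ring

lemma norm_sq_step (r : ℝ) {b : Fin d → EuclideanSpace ℝ (Fin n)} (hb : Orthonormal ℝ b)
    (σ : Fin d → Bool) : ‖step r b σ‖ ^ 2 = r ^ 2 * d := by
  rw [step, norm_smul, mul_pow, Real.norm_eq_abs, sq_abs, ← real_inner_self_eq_norm_sq,
    hb.inner_sum]
  simp [← sq, sgn_sq]

lemma sum_norm_sq_step (r : ℝ) {b : Fin d → EuclideanSpace ℝ (Fin n)} (hb : Orthonormal ℝ b)
    (x : EuclideanSpace ℝ (Fin n)) :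
    ∑ σ : Fin d → Bool, ‖x + step r b σ‖ ^ 2 = 2 ^ d * (‖x‖ ^ 2 + r ^ 2 * d) := by
  have e : ∀ σ : Fin d → Bool, ‖x + step r b σ‖ ^ 2
      = (‖x‖ ^ 2 + r ^ 2 * d) + 2 * ∑ k, sgn (σ k) * (r * inner ℝ (b k) x) := by
    intro σ
    rw [norm_add_sq_real, norm_sq_step r hb, real_inner_comm, inner_step]
    ring
  simp only [e]
  rw [Finset.sum_add_distrib, ← Finset.mul_sum, sum_sgn_linear]
  simp [mul_add]

/-- The exponential potential at time `t` and displacement `y` from the starting point. The factor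
`exp (-(c j) ^ 2 * t / 128)` is `exp (-λ ^ 2 * t / 2)` with `λ = c j / 8`; it compensates the growth
of the mean of `cosh (λ * ⟪y, p j⟫)` along the walk. -/
noncomputable def pot (c : Fin m → ℝ) (p : Fin m → EuclideanSpace ℝ (Fin n)) (t : ℝ)
    (y : EuclideanSpace ℝ (Fin n)) : ℝ :=
  ∑ j, Real.exp (-(c j) ^ 2 / 16) * Real.exp (-(c j) ^ 2 * t / 128) *
    Real.cosh (c j / 8 * inner ℝ y (p j))

/-- The potential is a supermartingale along the walk. -/
lemma sum_pot_step (c : Fin m → ℝ) (p : Fin m → EuclideanSpace ℝ (Fin n))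
    (hp : ∀ j, ‖p j‖ ≤ 1) (t r : ℝ) {b : Fin d → EuclideanSpace ℝ (Fin n)}
    (hb : Orthonormal ℝ b) (y : EuclideanSpace ℝ (Fin n)) :
    ∑ σ : Fin d → Bool, pot c p (t + r ^ 2) (y + step r b σ) ≤ 2 ^ d * pot c p t y := by
  simp only [pot]
  rw [Finset.sum_comm, Finset.mul_sum]
  refine Finset.sum_le_sum fun j _ => ?_
  rw [← Finset.mul_sum]
  have e : ∀ σ : Fin d → Bool, c j / 8 * inner ℝ (y + step r b σ) (p j)
      = c j / 8 * inner ℝ y (p j) + ∑ k, sgn (σ k) * (c j / 8 * (r * inner ℝ (b k) (p j))) := by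
    intro σ
    rw [inner_add_left, inner_step, mul_add, Finset.mul_sum]
    congr 1
    exact Finset.sum_congr rfl fun k _ => by ring
  simp only [e]
  have h1 := sum_sgn_cosh (c j / 8 * inner ℝ y (p j))
    (fun k => c j / 8 * (r * inner ℝ (b k) (p j)))
  have bessel : ∑ k, inner ℝ (b k) (p j) ^ 2 ≤ (1 : ℝ) := by
    have h := hb.sum_inner_products_le (p j) (s := Finset.univ)
    simp only [Real.norm_eq_abs, sq_abs] at h
    have := hp j
    have := norm_nonneg (p j)
    nlinarith
  have h2 : (∑ k, (c j / 8 * (r * inner ℝ (b k) (p j))) ^ 2) / 2 ≤ (c j) ^ 2 * r ^ 2 / 128 := by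
    have : ∑ k, (c j / 8 * (r * inner ℝ (b k) (p j))) ^ 2
        = (c j) ^ 2 * r ^ 2 / 64 * ∑ k, inner ℝ (b k) (p j) ^ 2 := by
      rw [Finset.mul_sum]
      exact Finset.sum_congr rfl fun k _ => by ring
    rw [this]
    have : 0 ≤ (c j) ^ 2 * r ^ 2 / 64 := by positivity
    nlinarith
  have h3 := Real.exp_le_exp.2 h2
  have h4 : Real.exp (-(c j) ^ 2 * (t + r ^ 2) / 128) * Real.exp ((c j) ^ 2 * r ^ 2 / 128)
      = Real.exp (-(c j) ^ 2 * t / 128) := by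
    rw [← Real.exp_add]
    congr 1
    ring
  have hch := Real.cosh_pos (c j / 8 * inner ℝ y (p j))
  calc _ ≤ Real.exp (-(c j) ^ 2 / 16) * Real.exp (-(c j) ^ 2 * (t + r ^ 2) / 128) *
        (2 ^ d * (Real.cosh (c j / 8 * inner ℝ y (p j)) * Real.exp ((c j) ^ 2 * r ^ 2 / 128))) := by
        gcongr
        exact h1.trans (by gcongr)
    _ = _ := by
        rw [← h4]
        ring

/-- A tight constraint contributes at least `exp (-1/2) / 2 ≥ 1/4` to the potential, up to
time `8`. -/
lemma card_tight_le (c : Fin m → ℝ) (hc : ∀ j, 0 ≤ c j) (p : Fin m → EuclideanSpace ℝ (Fin n))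
    (η : ℝ) (hη : ∀ j, c j * η ≤ 4) (t : ℝ) (ht : t ≤ 8) (y : EuclideanSpace ℝ (Fin n)) :
    ((univ.filter fun j => c j - η ≤ |inner ℝ y (p j)|).card : ℝ) ≤ 4 * pot c p t y := by
  have key : ∀ j ∈ univ.filter (fun j => c j - η ≤ |inner ℝ y (p j)|),
      (1 / 4 : ℝ) ≤ Real.exp (-(c j) ^ 2 / 16) * Real.exp (-(c j) ^ 2 * t / 128) *
        Real.cosh (c j / 8 * inner ℝ y (p j)) := by
    intro j hj
    have hj' := (Finset.mem_filter.1 hj).2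
    have hcj := hc j
    have h1 : Real.exp (c j / 8 * (c j - η)) / 2 ≤ Real.cosh (c j / 8 * inner ℝ y (p j)) := by
      rw [← Real.cosh_abs, abs_mul, abs_of_nonneg (by positivity : 0 ≤ c j / 8), Real.cosh_eq]
      have := Real.exp_le_exp.2 (mul_le_mul_of_nonneg_left hj' (by positivity : 0 ≤ c j / 8))
      have := Real.exp_pos (-(c j / 8 * |inner ℝ y (p j)|))
      linarith
    have h2 : (1 / 2 : ℝ) ≤ Real.exp (-(c j) ^ 2 / 16) * Real.exp (-(c j) ^ 2 * t / 128) *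
        Real.exp (c j / 8 * (c j - η)) := by
      rw [← Real.exp_add, ← Real.exp_add]
      have := Real.add_one_le_exp (-(c j) ^ 2 / 16 + -(c j) ^ 2 * t / 128 + c j / 8 * (c j - η))
      have := hη j
      have : (c j) ^ 2 * t ≤ (c j) ^ 2 * 8 := by gcongr
      nlinarith
    calc (1 / 4 : ℝ) ≤ Real.exp (-(c j) ^ 2 / 16) * Real.exp (-(c j) ^ 2 * t / 128) *
        (Real.exp (c j / 8 * (c j - η)) / 2) := by linarith
      _ ≤ _ := by gcongr
  have h := Finset.card_nsmul_le_sum _ _ _ key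
  have h2 : ∑ j ∈ univ.filter (fun j => c j - η ≤ |inner ℝ y (p j)|),
      Real.exp (-(c j) ^ 2 / 16) * Real.exp (-(c j) ^ 2 * t / 128) *
        Real.cosh (c j / 8 * inner ℝ y (p j)) ≤ pot c p t y := by
    refine Finset.sum_le_sum_of_subset_of_nonneg (Finset.subset_univ _) fun j _ _ => ?_
    have := Real.cosh_pos (c j / 8 * inner ℝ y (p j))
    positivity
  rw [nsmul_eq_mul] at h
  linarith

/-! ### The derandomised sticky walk -/

/-- Orthonormal directions in which the coordinates in `F` and the vectors `p j`, `j ∈ S`, do not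
change. -/
lemma exists_directions (p : Fin m → EuclideanSpace ℝ (Fin n)) (F : Finset (Fin n))
    (S : Finset (Fin m)) :
    ∃ (d : ℕ) (b : Fin d → EuclideanSpace ℝ (Fin n)), Orthonormal ℝ b ∧
      n ≤ d + F.card + S.card ∧ d ≤ n ∧ (∀ i ∈ F, ∀ k, b k i = 0) ∧
      ∀ j ∈ S, ∀ k, inner ℝ (b k) (p j) = 0 := by
  classical
  set A : Finset (EuclideanSpace ℝ (Fin n)) :=
    F.image (fun i => EuclideanSpace.single i (1 : ℝ)) ∪ S.image p with hA
  set W := Submodule.span ℝ (A : Set (EuclideanSpace ℝ (Fin n))) with hW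
  have hfr : Module.finrank ℝ W + Module.finrank ℝ Wᗮ = n := by
    rw [Submodule.finrank_add_finrank_orthogonal]
    simp
  have hWA : Module.finrank ℝ W ≤ F.card + S.card :=
    (finrank_span_finset_le_card A).trans ((Finset.card_union_le _ _).trans
      (add_le_add Finset.card_image_le Finset.card_image_le))
  have horth : ∀ k, ∀ a ∈ A, inner ℝ ((stdOrthonormalBasis ℝ Wᗮ k : Wᗮ) :
      EuclideanSpace ℝ (Fin n)) a = 0 := fun k a ha =>
    Submodule.inner_left_of_mem_orthogonal (Submodule.subset_span ha) (Submodule.coe_mem _)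
  refine ⟨Module.finrank ℝ Wᗮ, fun k => (stdOrthonormalBasis ℝ Wᗮ k : Wᗮ), ?_, by omega, by omega,
    ?_, ?_⟩
  · exact (stdOrthonormalBasis ℝ Wᗮ).orthonormal.comp_linearIsometry Wᗮ.subtypeₗᵢ
  · intro i hi k
    have := horth k (EuclideanSpace.single i (1 : ℝ))
      (Finset.mem_union_left _ (Finset.mem_image_of_mem _ hi))
    simpa [EuclideanSpace.inner_single_right] using this
  · intro j hj k
    exact horth k (p j) (Finset.mem_union_right _ (Finset.mem_image_of_mem _ hj))

/-- One derandomised step of the walk: while fewer than half of the coordinates are frozen, the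
quantity `‖x‖ ^ 2 - t * n / 2 - (8 - t) * 4 * pot` can be kept from decreasing. -/
lemma exists_step (c : Fin m → ℝ) (hc : ∀ j, 0 ≤ c j) (p : Fin m → EuclideanSpace ℝ (Fin n))
    (hp : ∀ j, ‖p j‖ ≤ 1) (x₀ : EuclideanSpace ℝ (Fin n))
    (η : ℝ) (hη0 : 0 < η) (hη : ∀ j, c j * η ≤ 4) (r t : ℝ) (hr : r ^ 2 * n ≤ η ^ 2)
    (ht : t + r ^ 2 ≤ 8) (x : EuclideanSpace ℝ (Fin n)) (hx : ∀ i, |x i| ≤ 1)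
    (hxc : ∀ j, |inner ℝ (x - x₀) (p j)| ≤ c j)
    (hF : ((univ.filter fun i => 1 - η ≤ |x i|).card : ℝ) < n / 2) :
    ∃ x' : EuclideanSpace ℝ (Fin n), (∀ i, |x' i| ≤ 1) ∧
      (∀ j, |inner ℝ (x' - x₀) (p j)| ≤ c j) ∧
      ‖x‖ ^ 2 - t * n / 2 - (8 - t) * (4 * pot c p t (x - x₀)) ≤
        ‖x'‖ ^ 2 - (t + r ^ 2) * n / 2 -
          (8 - (t + r ^ 2)) * (4 * pot c p (t + r ^ 2) (x' - x₀)) := by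
  obtain ⟨d, b, hb, hd, hdn, hbF, hbS⟩ := exists_directions p
    (univ.filter fun i => 1 - η ≤ |x i|) (univ.filter fun j => c j - η ≤ |inner ℝ (x - x₀) (p j)|)
  have htight := card_tight_le c hc p η hη t (by nlinarith [sq_nonneg r]) (x - x₀)
  have hd' : (n : ℝ) / 2 - 4 * pot c p t (x - x₀) ≤ d := by
    have : (n : ℝ) ≤ d + (univ.filter fun i => 1 - η ≤ |x i|).card +
      (univ.filter fun j => c j - η ≤ |inner ℝ (x - x₀) (p j)|).card := by exact_mod_cast hd
    linarith
  have hnorm : ∀ σ, ‖step r b σ‖ ≤ η := by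
    intro σ
    refine abs_le_of_sq_le_sq' ?_ hη0.le |>.2
    rw [norm_sq_step r hb]
    refine le_trans ?_ hr
    gcongr
  -- the average over all signs of the quantity after the step is at least its current value
  obtain ⟨σ, -, hσ⟩ : ∃ σ ∈ (univ : Finset (Fin d → Bool)),
      ‖x‖ ^ 2 - t * n / 2 - (8 - t) * (4 * pot c p t (x - x₀)) ≤
        ‖x + step r b σ‖ ^ 2 - (t + r ^ 2) * n / 2 -
          (8 - (t + r ^ 2)) * (4 * pot c p (t + r ^ 2) ((x - x₀) + step r b σ)) := by
    refine Finset.exists_le_of_sum_le Finset.univ_nonempty ?_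
    simp only [Finset.sum_sub_distrib, ← Finset.mul_sum, sum_norm_sq_step r hb]
    have h1 := sum_pot_step c p hp t r hb (x - x₀)
    have h2 := mul_le_mul_of_nonneg_left h1 (by linarith : 0 ≤ (8 - (t + r ^ 2)) * 4)
    have h3 := mul_le_mul_of_nonneg_left hd' (by positivity : 0 ≤ (2 : ℝ) ^ d * r ^ 2)
    simp only [Finset.sum_const, Finset.card_univ, Fintype.card_pi, Fintype.card_bool,
      Finset.prod_const, Fintype.card_fin, nsmul_eq_mul, Nat.cast_pow, Nat.cast_ofNat]
    linarith
  refine ⟨x + step r b σ, ?_, ?_, ?_⟩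
  · intro i
    by_cases hi : 1 - η ≤ |x i|
    · have : (step r b σ) i = 0 := by
        simp [step, hbF i (by simpa using hi)]
      simpa [this] using hx i
    · have h1 : |(step r b σ) i| ≤ η := by
        simpa using (PiLp.norm_apply_le (step r b σ) i).trans (hnorm σ)
      have h2 := abs_add_le (x i) ((step r b σ) i)
      rw [PiLp.add_apply]
      linarith
  · intro j
    rw [add_sub_right_comm, inner_add_left]
    by_cases hj : c j - η ≤ |inner ℝ (x - x₀) (p j)|
    · have : inner ℝ (step r b σ) (p j) = 0 := by
        rw [inner_step]
        simp [hbS j (by simpa using hj)]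
      simpa [this] using hxc j
    · have h1 : |inner ℝ (step r b σ) (p j)| ≤ η := by
        refine (abs_real_inner_le_norm _ _).trans ?_
        nlinarith [hnorm σ, hp j, norm_nonneg (step r b σ), norm_nonneg (p j)]
      have h2 := abs_add_le (inner ℝ (x - x₀) (p j)) (inner ℝ (step r b σ) (p j))
      linarith
  · rwa [add_sub_right_comm]

/-- The partial coloring statement for vectors of norm at most `1`, where the tolerance `η`
must satisfy `c j * η ≤ 4` so that nearly tight constraints still weigh at least `1/4`. -/
lemma exists_half_frozen (hn : 0 < n) (c : Fin m → ℝ) (hc : ∀ j, 0 ≤ c j)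
    (p : Fin m → EuclideanSpace ℝ (Fin n)) (hp : ∀ j, ‖p j‖ ≤ 1)
    (x₀ : EuclideanSpace ℝ (Fin n)) (hx₀ : ∀ i, |x₀ i| ≤ 1)
    (hsum : ∑ j : Fin m, Real.exp (-(c j) ^ 2 / 16) ≤ (n : ℝ) / 16)
    (η : ℝ) (hη0 : 0 < η) (hη : ∀ j, c j * η ≤ 4) :
    ∃ x : EuclideanSpace ℝ (Fin n), (∀ i, |x i| ≤ 1) ∧
      (∀ j, |inner ℝ (x - x₀) (p j)| ≤ c j) ∧
      (n : ℝ) / 2 ≤ (univ.filter fun i => 1 - η ≤ |x i|).card := by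
  by_contra! hcon
  have hn' : (0 : ℝ) < n := by exact_mod_cast hn
  obtain ⟨N, hN⟩ := exists_nat_gt (8 * n / η ^ 2)
  have hN0 : (0 : ℝ) < N := lt_of_le_of_lt (by positivity) hN
  set r := Real.sqrt (8 / N) with hr
  have hr2 : r ^ 2 = 8 / N := Real.sq_sqrt (by positivity)
  have hrN : (N : ℝ) * r ^ 2 = 8 := by rw [hr2]; field_simp
  have hrη : r ^ 2 * n ≤ η ^ 2 := by
    rw [hr2, div_mul_eq_mul_div, div_le_iff₀ hN0]
    rw [div_lt_iff₀ (by positivity)] at hN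
    linarith
  have walk : ∀ k : ℕ, k ≤ N → ∃ x : EuclideanSpace ℝ (Fin n), (∀ i, |x i| ≤ 1) ∧
      (∀ j, |inner ℝ (x - x₀) (p j)| ≤ c j) ∧
      -(2 * n : ℝ) ≤ ‖x‖ ^ 2 - (k * r ^ 2) * n / 2 -
        (8 - k * r ^ 2) * (4 * pot c p (k * r ^ 2) (x - x₀)) := by
    intro k
    induction k with
    | zero =>
      intro _
      refine ⟨x₀, hx₀, by simpa using hc, ?_⟩
      have h : pot c p 0 0 ≤ n / 16 := by simpa [pot] using hsum
      have := sq_nonneg ‖x₀‖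
      simp only [Nat.cast_zero, zero_mul, sub_self]
      linarith
    | succ k ih =>
      intro hk
      obtain ⟨x, hx, hxc, hpot⟩ := ih (by omega)
      have hcast : ((k + 1 : ℕ) : ℝ) * r ^ 2 = k * r ^ 2 + r ^ 2 := by push_cast; ring
      have ht : k * r ^ 2 + r ^ 2 ≤ 8 := by
        rw [← hcast, ← hrN]
        gcongr
      obtain ⟨x', h1, h2, h3⟩ := exists_step c hc p hp x₀ η hη0 hη r (k * r ^ 2) hrη ht x hx hxc
        (hcon x hx hxc)
      refine ⟨x', h1, h2, ?_⟩
      rw [hcast]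
      exact hpot.trans h3
  obtain ⟨x, hx, -, h⟩ := walk N le_rfl
  rw [hrN] at h
  have hxn : ‖x‖ ^ 2 ≤ n := by
    rw [EuclideanSpace.real_norm_sq_eq]
    calc ∑ i, x i ^ 2 ≤ ∑ _i : Fin n, (1 : ℝ) :=
          Finset.sum_le_sum fun i _ => (sq_le_one_iff_abs_le_one _).2 (hx i)
      _ = n := by simp
  linarith

end PartialColoring

/-! ### Normalisation of the constraint vectors -/

/-- **Main Partial Coloring result (Theorem 5, existence form)**: given vectors
`v₁, ..., vₘ ∈ ℝⁿ`, a starting point `x₀ ∈ [-1,1]ⁿ` and thresholds `cⱼ ≥ 0` with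
`∑ⱼ exp(-cⱼ²/16) ≤ n/16`, for every `δ > 0` there exists `x ∈ [-1,1]ⁿ` with
`|⟨x - x₀, vⱼ⟩| ≤ cⱼ‖vⱼ‖₂` for all `j`, and `|xᵢ| ≥ 1 - δ` for at least `n/2` indices `i`. -/
theorem partial_coloring (n m : ℕ) (hn : 0 < n) (hm : 0 < m)
    (v : Fin m → Fin n → ℝ) (x₀ : Fin n → ℝ) (hx₀ : ∀ i, |x₀ i| ≤ 1)
    (c : Fin m → ℝ) (hc : ∀ j, 0 ≤ c j)
    (hsum : ∑ j : Fin m, Real.exp (-(c j) ^ 2 / 16) ≤ (n : ℝ) / 16)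
    (δ : ℝ) (hδ : 0 < δ) :
    ∃ x : Fin n → ℝ, (∀ i, |x i| ≤ 1) ∧
      (∀ j : Fin m,
        |∑ i : Fin n, (x i - x₀ i) * v j i| ≤ c j * Real.sqrt (∑ i : Fin n, (v j i) ^ 2)) ∧
      (n : ℝ) / 2 ≤ (Finset.univ.filter (fun i : Fin n => 1 - δ ≤ |x i|)).card := by
  have hC : 0 ≤ ∑ j, c j := Finset.sum_nonneg fun j _ => hc j
  set η := min δ (4 / (1 + ∑ j, c j)) with hηdef
  have hη0 : 0 < η := lt_min hδ (by positivity)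
  have hη : ∀ j, c j * η ≤ 4 := by
    intro j
    have h1 : c j ≤ ∑ j, c j := Finset.single_le_sum (fun j _ => hc j) (Finset.mem_univ j)
    have h2 : η * (1 + ∑ j, c j) ≤ 4 := by
      rw [← le_div_iff₀ (by positivity)]
      exact min_le_right _ _
    nlinarith
  let w : Fin m → EuclideanSpace ℝ (Fin n) := fun j => WithLp.toLp 2 (v j)
  have hw : ∀ j, ‖w j‖ = Real.sqrt (∑ i, v j i ^ 2) := by
    intro j
    simp [EuclideanSpace.norm_eq, w]
  -- a zero vector is normalised to zero, which also has norm at most `1`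
  obtain ⟨x, hx, hxc, hcard⟩ := PartialColoring.exists_half_frozen hn c hc
    (fun j => ‖w j‖⁻¹ • w j)
    (fun j => by
      rw [norm_smul, norm_inv, norm_norm]
      exact inv_mul_le_one)
    (WithLp.toLp 2 x₀) hx₀ hsum η hη0 hη
  refine ⟨x, hx, fun j => ?_, hcard.trans ?_⟩
  · have hin : inner ℝ (x - WithLp.toLp 2 x₀) (w j) = ∑ i, (x i - x₀ i) * v j i := by
      simp [PiLp.inner_apply, w, mul_comm]
    rw [← hin, ← hw]
    rcases eq_or_ne (w j) 0 with h0 | h0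
    · simp [h0]
    · have hpos : 0 < ‖w j‖ := norm_pos_iff.2 h0
      have h := hxc j
      rwa [real_inner_smul_right, abs_mul, abs_inv, abs_norm, inv_mul_le_iff₀ hpos,
        mul_comm] at h
  · refine Nat.cast_le.2 (Finset.card_le_card fun i hi => ?_)
    simp only [Finset.mem_filter, Finset.mem_univ, true_and] at hi ⊢
    have : η ≤ δ := min_le_left _ _
    linarith
end
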